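/- Assume for each n that the martingale differences (X_i)_{1≤i≤n} satisfy conditions (A1), (A2), and (A3) with max{δ_n, ε_n, κ_n} → 0 as n → ∞. Let (a_n) be a sequence of real numbers with a_n → ∞ and a_n ε_n → 0 as n → ∞. Then for every Borel set B ⊆ ℝ, − inf_{x ∈ B°} x²/2 ≤ liminf_{n→∞} (1/a_n²) ln P( W_n / a_n ∈ B ) ≤ limsup_{n→∞} (1/a_n²) ln P( W_n / a_n ∈ B ) ≤ − inf_{x ∈ B̄} x²/2, where B° and B̄ denote the interior and the closure of B. -/

import Mathlib

open MeasureTheory Filter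
open scoped Topology ENNReal

noncomputable def stdNormalCDF (x : ℝ) : ℝ :=
  (Real.sqrt (2 * Real.pi))⁻¹ * ∫ t in Set.Iic x, Real.exp (-(t ^ 2) / 2)

/-- A finite sequence of square-integrable martingale differences
`X 1, ..., X n` adapted to a filtration `F 0 ⊆ F 1 ⊆ ... ⊆ F n`, with
`F 0` trivial, `E[X i | F (i-1)] = 0` and `0 < E[(X i)^2] < ∞`. -/
structure MDS (Ω : Type) [mΩ : MeasurableSpace Ω] (P : Measure Ω) where
  n : ℕ
  npos : 0 < n
  F : ℕ → MeasurableSpace Ω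
  F_mono : Monotone F
  F_le : ∀ i, F i ≤ mΩ
  F_zero : F 0 = ⊥
  X : ℕ → Ω → ℝ
  meas : ∀ i, 1 ≤ i → i ≤ n → StronglyMeasurable[F i] (X i)
  sq_int : ∀ i, 1 ≤ i → i ≤ n → Integrable (fun ω => (X i ω) ^ 2) P
  mean_zero : ∀ i, 1 ≤ i → i ≤ n → P[X i|F (i - 1)] =ᵐ[P] 0
  var_pos : ∀ i, 1 ≤ i → i ≤ n → 0 < ∫ ω, (X i ω) ^ 2 ∂P

namespace MDS

variable {Ω : Type} [mΩ : MeasurableSpace Ω] {P : Measure Ω}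

/-- `S_n = ∑_{i=1}^n X_i`. -/
noncomputable def S (A : MDS Ω P) : Ω → ℝ := fun ω => ∑ i ∈ Finset.Icc 1 A.n, A.X i ω

/-- `B_n² = ∑_{i=1}^n E[X_i²]`. -/
noncomputable def Bsq (A : MDS Ω P) : ℝ := ∑ i ∈ Finset.Icc 1 A.n, ∫ ω, (A.X i ω) ^ 2 ∂P

/-- `[S]_n = ∑_{i=1}^n X_i²`. -/
noncomputable def QV (A : MDS Ω P) : Ω → ℝ := fun ω => ∑ i ∈ Finset.Icc 1 A.n, (A.X i ω) ^ 2

/-- `⟨S⟩_n = ∑_{i=1}^n E[X_i² | F_{i-1}]`. -/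
noncomputable def CV (A : MDS Ω P) : Ω → ℝ :=
  fun ω => ∑ i ∈ Finset.Icc 1 A.n, (P[fun ω' => (A.X i ω') ^ 2|A.F (i - 1)]) ω

/-- `W_n = S_n / √[S]_n`. -/
noncomputable def W (A : MDS Ω P) : Ω → ℝ := fun ω => A.S ω / Real.sqrt (A.QV ω)

/-- Condition (A1): `|⟨S⟩_n − B_n²| ≤ δ² B_n²` a.s., with `δ ∈ [0, 1/4]`. -/
def CondA1 (A : MDS Ω P) (δ : ℝ) : Prop :=
  0 ≤ δ ∧ δ ≤ 1 / 4 ∧ ∀ᵐ ω ∂P, |A.CV ω - A.Bsq| ≤ δ ^ 2 * A.Bsq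

/-- Condition (A2): `∑_{i=1}^n E[|X_i|^{2+ρ} | F_{i-1}] ≤ ε^ρ B_n^{2+ρ}` a.s.,
with `ε ∈ (0, 1/4]`. -/
def CondA2 (A : MDS Ω P) (ρ ε : ℝ) : Prop :=
  0 < ε ∧ ε ≤ 1 / 4 ∧
    (∀ i, 1 ≤ i → i ≤ A.n → Integrable (fun ω => |A.X i ω| ^ (2 + ρ)) P) ∧
    ∀ᵐ ω ∂P,
      ∑ i ∈ Finset.Icc 1 A.n, (P[fun ω' => |A.X i ω'| ^ (2 + ρ)|A.F (i - 1)]) ω ≤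
        ε ^ ρ * A.Bsq ^ ((2 + ρ) / 2)

/-- Condition (A3): `E[X_i² | F_{i-1}] ≤ κ² B_n²` a.s. for each `i`, with `κ ∈ (0, 1/4]`. -/
def CondA3 (A : MDS Ω P) (κ : ℝ) : Prop :=
  0 < κ ∧ κ ≤ 1 / 4 ∧
    ∀ i, 1 ≤ i → i ≤ A.n →
      ∀ᵐ ω ∂P, (P[fun ω' => (A.X i ω') ^ 2|A.F (i - 1)]) ω ≤ κ ^ 2 * A.Bsq

/-- Condition (A4): `E[|X_i|^{2+ρ} | F_{i-1}] ≤ (γ B_n)^ρ E[X_i² | F_{i-1}]` a.s.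
for each `i`, with `γ ∈ (0, 1/4]`. -/
def CondA4 (A : MDS Ω P) (ρ γ : ℝ) : Prop :=
  0 < γ ∧ γ ≤ 1 / 4 ∧
    (∀ i, 1 ≤ i → i ≤ A.n → Integrable (fun ω => |A.X i ω| ^ (2 + ρ)) P) ∧
    ∀ i, 1 ≤ i → i ≤ A.n →
      ∀ᵐ ω ∂P,
        (P[fun ω' => |A.X i ω'| ^ (2 + ρ)|A.F (i - 1)]) ω ≤
          (γ * Real.sqrt A.Bsq) ^ ρ * (P[fun ω' => (A.X i ω') ^ 2|A.F (i - 1)]) ω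

end MDS

/-!
Truncation at level `1` reduces everything to exponential moments of bounded increments. Write
`Z j = a X j / B`, so that the conditional variances of the `Z j` add up to about `a ^ 2` and their
conditional moments of order `2 + ρ` to `o(a ^ 2)`. A truncated quadratic `l z + s z ^ 2` of `Z j`
then has conditional cumulant `(l ^ 2 / 2 + s) E[(Z j) ^ 2 | F j]` up to a negligible error, and
these cumulants add up to `(l ^ 2 / 2 + s) a ^ 2`, a deterministic quantity.

Upper bound: a large self-normalized sum forces the truncated sum to be large, or the truncated
quadratic variation to be small, or many jumps to exceed `1`. Indeed by Cauchy-Schwarz the jumps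
contribute at most the square root of their number to the self-normalized sum, however large they
are. Chernoff's inequality shows that the last two events are negligible and that the first one has
the Gaussian rate.

Lower bound: tilting the law by the exponential martingale of the truncated increments `y Z j`
gives the `Z j` a drift under which the self-normalized sum, divided by `a`, converges to `y`; the
density of the tilted law is about `exp (y ^ 2 a ^ 2 / 2)` on the relevant event.
-/

open Real Finset

section ConditionalCumulant

variable {Ω : Type*} {m mΩ : MeasurableSpace Ω} {P : Measure Ω} {f : Ω → ℝ} {C : ℝ}

/-- The conditional cumulant `log E[exp f | m]`: subtracting it from `f` gives `exp f` conditional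
mean one. -/
noncomputable def condCumulant (P : Measure Ω) (m : MeasurableSpace Ω) (f : Ω → ℝ) : Ω → ℝ :=
  fun ω => log ((P[fun ω' => exp (f ω') | m]) ω)

lemma stronglyMeasurable_condCumulant : StronglyMeasurable[m] (condCumulant P m f) :=
  (measurable_log.comp stronglyMeasurable_condExp.measurable).stronglyMeasurable

lemma integrable_exp_of_abs_le [IsFiniteMeasure P] (hf : AEStronglyMeasurable f P)
    (hC : ∀ᵐ ω ∂P, |f ω| ≤ C) : Integrable (fun ω => exp (f ω)) P := by
  refine .of_bound (continuous_exp.comp_aestronglyMeasurable hf) (exp C) ?_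
  filter_upwards [hC] with ω hω
  rw [norm_of_nonneg (exp_pos _).le, exp_le_exp]
  exact (le_abs_self _).trans hω

lemma condExp_exp_mem_Icc [IsFiniteMeasure P] (hm : m ≤ mΩ) (hf : AEStronglyMeasurable f P)
    (hC : ∀ᵐ ω ∂P, |f ω| ≤ C) :
    ∀ᵐ ω ∂P, (P[fun ω' => exp (f ω') | m]) ω ∈ Set.Icc (exp (-C)) (exp C) := by
  have hint := integrable_exp_of_abs_le hf hC
  have hlower := condExp_mono (m := m) (integrable_const (exp (-C))) hint
    (hC.mono fun ω hω => exp_le_exp.2 (abs_le.1 hω).1)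
  have hupper := condExp_mono (m := m) hint (integrable_const (exp C))
    (hC.mono fun ω hω => exp_le_exp.2 (abs_le.1 hω).2)
  rw [condExp_const hm] at hlower hupper
  filter_upwards [hlower, hupper] with ω h₁ h₂ using ⟨h₁, h₂⟩

lemma exp_condCumulant [IsFiniteMeasure P] (hm : m ≤ mΩ) (hf : AEStronglyMeasurable f P)
    (hC : ∀ᵐ ω ∂P, |f ω| ≤ C) :
    ∀ᵐ ω ∂P, exp (condCumulant P m f ω) = (P[fun ω' => exp (f ω') | m]) ω :=
  (condExp_exp_mem_Icc hm hf hC).mono fun _ hω => exp_log ((exp_pos _).trans_le hω.1)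

lemma abs_condCumulant_le [IsFiniteMeasure P] (hm : m ≤ mΩ) (hf : AEStronglyMeasurable f P)
    (hC : ∀ᵐ ω ∂P, |f ω| ≤ C) : ∀ᵐ ω ∂P, |condCumulant P m f ω| ≤ C := by
  filter_upwards [condExp_exp_mem_Icc hm hf hC] with ω hω
  have hpos := (exp_pos _).trans_le hω.1
  exact abs_le.2 ⟨(le_log_iff_exp_le hpos).2 hω.1, (log_le_iff_le_exp hpos).2 hω.2⟩

lemma integrable_exp_sub_condCumulant [IsFiniteMeasure P] (hm : m ≤ mΩ)
    (hf : AEStronglyMeasurable f P) (hC : ∀ᵐ ω ∂P, |f ω| ≤ C) :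
    Integrable (fun ω => exp (f ω - condCumulant P m f ω)) P := by
  refine integrable_exp_of_abs_le (C := C + C)
    (hf.sub (stronglyMeasurable_condCumulant.mono hm).aestronglyMeasurable) ?_
  filter_upwards [hC, abs_condCumulant_le hm hf hC] with ω h₁ h₂
  exact (abs_sub _ _).trans (add_le_add h₁ h₂)

lemma condExp_exp_sub_condCumulant [IsFiniteMeasure P] (hm : m ≤ mΩ)
    (hf : AEStronglyMeasurable f P) (hC : ∀ᵐ ω ∂P, |f ω| ≤ C) :
    P[fun ω => exp (f ω - condCumulant P m f ω) | m] =ᵐ[P] 1 := by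
  have hint := integrable_exp_sub_condCumulant hm hf hC
  have hweight : StronglyMeasurable[m] fun ω => exp (-condCumulant P m f ω) :=
    continuous_exp.comp_stronglyMeasurable stronglyMeasurable_condCumulant.neg
  have hfactor : (fun ω => exp (f ω - condCumulant P m f ω)) =
      (fun ω => exp (-condCumulant P m f ω)) * fun ω => exp (f ω) := by
    ext ω
    rw [Pi.mul_apply, ← exp_add, neg_add_eq_sub]
  rw [hfactor] at hint ⊢
  filter_upwards [condExp_mul_of_stronglyMeasurable_left hweight hint
    (integrable_exp_of_abs_le hf hC), exp_condCumulant hm hf hC] with ω hpull hexp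
  rw [hpull, Pi.mul_apply, ← hexp, ← exp_add, neg_add_cancel, exp_zero, Pi.one_apply]

lemma condCumulant_sub_le [IsFiniteMeasure P] {g h : Ω → ℝ} {D : ℝ} (hm : m ≤ mΩ)
    (hf : AEStronglyMeasurable f P) (hC : ∀ᵐ ω ∂P, |f ω| ≤ C)
    (hg : AEStronglyMeasurable g P) (hD : ∀ᵐ ω ∂P, |g ω| ≤ D)
    (hint : Integrable h P) (h0 : 0 ≤ᵐ[P] h) (hgf : ∀ᵐ ω ∂P, exp (g ω) ≤ exp (f ω) + h ω) :
    ∀ᵐ ω ∂P, condCumulant P m g ω - condCumulant P m f ω ≤ exp C * (P[h | m]) ω := by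
  have hf' := integrable_exp_of_abs_le hf hC
  have hmono := condExp_mono (m := m) (integrable_exp_of_abs_le hg hD) (hf'.add hint) hgf
  filter_upwards [hmono, condExp_add hf' hint m, condExp_exp_mem_Icc hm hf hC,
    condExp_exp_mem_Icc hm hg hD, condExp_nonneg (m := m) h0] with ω hle hadd hp hq hh
  set p := (P[fun ω' => exp (f ω') | m]) ω
  set q := (P[fun ω' => exp (g ω') | m]) ω
  have hp0 : 0 < p := (exp_pos _).trans_le hp.1
  have hq0 : 0 < q := (exp_pos _).trans_le hq.1
  have hqp : q - p ≤ (P[h | m]) ω := sub_le_iff_le_add'.2 (hle.trans_eq hadd)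
  have hinv : p⁻¹ ≤ exp C := inv_le_of_inv_le₀ (exp_pos C) ((exp_neg C).symm.trans_le hp.1)
  calc log q - log p = log (q / p) := (log_div hq0.ne' hp0.ne').symm
    _ ≤ q / p - 1 := log_le_sub_one_of_pos (by positivity)
    _ = p⁻¹ * (q - p) := by field_simp
    _ ≤ p⁻¹ * (P[h | m]) ω := by gcongr
    _ ≤ exp C * (P[h | m]) ω := mul_le_mul_of_nonneg_right hinv hh

end ConditionalCumulant

section ExponentialTilting

variable {Ω : Type*} {mΩ : MeasurableSpace Ω} {P : Measure Ω} {F : Filtration ℕ mΩ}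
  {f g : ℕ → Ω → ℝ} {C D t b c : ℝ} {N : ℕ}

/-- The increments of an adapted process with bounded steps; `f j` is revealed at time `j + 1`. -/
structure IsBoundedIncrement (F : Filtration ℕ mΩ) (f : ℕ → Ω → ℝ) (C : ℝ) : Prop where
  stronglyMeasurable : ∀ j, StronglyMeasurable[F (j + 1)] (f j)
  abs_le : ∀ j ω, |f j ω| ≤ C

lemma IsBoundedIncrement.add (hf : IsBoundedIncrement F f C) (hg : IsBoundedIncrement F g D) :
    IsBoundedIncrement F (f + g) (C + D) where
  stronglyMeasurable j := (hf.stronglyMeasurable j).add (hg.stronglyMeasurable j)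
  abs_le j ω := (abs_add_le _ _).trans (add_le_add (hf.abs_le j ω) (hg.abs_le j ω))

lemma IsBoundedIncrement.measurable (hf : IsBoundedIncrement F f C) (j : ℕ) : Measurable (f j) :=
  ((hf.stronglyMeasurable j).mono (F.le _)).measurable

/-- The compensated sum `∑ (f j - log E[exp (f j) | F j])`, whose exponential is a martingale
in `N`. -/
noncomputable def compensatedSum (P : Measure Ω) (F : Filtration ℕ mΩ) (f : ℕ → Ω → ℝ) (N : ℕ) :
    Ω → ℝ :=
  fun ω => ∑ j ∈ range N, (f j ω - condCumulant P (F j) (f j) ω)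

lemma IsBoundedIncrement.stronglyMeasurable_compensatedSum (hf : IsBoundedIncrement F f C)
    (N : ℕ) : StronglyMeasurable[F N] (compensatedSum P F f N) := by
  refine stronglyMeasurable_fun_sum _ fun j hj => ?_
  rw [mem_range] at hj
  exact ((hf.stronglyMeasurable j).mono (F.mono hj)).sub
    (stronglyMeasurable_condCumulant.mono (F.mono hj.le))

lemma IsBoundedIncrement.integrable_exp_compensatedSum [IsFiniteMeasure P]
    (hf : IsBoundedIncrement F f C) (N : ℕ) :
    Integrable (fun ω => exp (compensatedSum P F f N ω)) P := by
  refine integrable_exp_of_abs_le (C := ∑ _j ∈ range N, (C + C))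
    ((hf.stronglyMeasurable_compensatedSum N).mono (F.le N)).aestronglyMeasurable ?_
  have hκ : ∀ᵐ ω ∂P, ∀ j, |condCumulant P (F j) (f j) ω| ≤ C := ae_all_iff.2 fun j =>
    abs_condCumulant_le (F.le j) (hf.measurable j).aestronglyMeasurable (ae_of_all _ (hf.abs_le j))
  filter_upwards [hκ] with ω hω
  exact (abs_sum_le_sum_abs _ _).trans (sum_le_sum fun j _ =>
    (abs_sub _ _).trans (add_le_add (hf.abs_le j ω) (hω j)))

lemma IsBoundedIncrement.integral_exp_compensatedSum [IsProbabilityMeasure P]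
    (hf : IsBoundedIncrement F f C) (N : ℕ) : ∫ ω, exp (compensatedSum P F f N ω) ∂P = 1 := by
  induction N with
  | zero => simp [compensatedSum]
  | succ N ih =>
    have hfN := (hf.measurable N).aestronglyMeasurable (μ := P)
    have hC : ∀ᵐ ω ∂P, |f N ω| ≤ C := ae_of_all _ (hf.abs_le N)
    set past := fun ω => exp (compensatedSum P F f N ω)
    set step := fun ω => exp (f N ω - condCumulant P (F N) (f N) ω)
    have hsplit : (fun ω => exp (compensatedSum P F f (N + 1) ω)) = past * step := by
      ext ω
      simp only [past, step, compensatedSum, sum_range_succ, exp_add, Pi.mul_apply]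
    have hint : Integrable (past * step) P := hsplit ▸ hf.integrable_exp_compensatedSum (N + 1)
    have hone : P[step | F N] =ᵐ[P] 1 := condExp_exp_sub_condCumulant (F.le N) hfN hC
    have hstep : Integrable step P := integrable_exp_sub_condCumulant (F.le N) hfN hC
    have hpull := condExp_mul_of_stronglyMeasurable_left (μ := P) (m := F N)
      (continuous_exp.comp_stronglyMeasurable (hf.stronglyMeasurable_compensatedSum N)) hint hstep
    calc ∫ ω, exp (compensatedSum P F f (N + 1) ω) ∂P = ∫ ω, (past * step) ω ∂P := by rw [hsplit]
      _ = ∫ ω, (P[past * step | F N]) ω ∂P := (integral_condExp (F.le N)).symm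
      _ = ∫ ω, past ω ∂P := by
        refine integral_congr_ae ?_
        filter_upwards [hpull, hone] with ω h₁ h₂
        rw [h₁, Pi.mul_apply, h₂, Pi.one_apply, mul_one]
      _ = 1 := ih

/-- The law of the process whose `j`-th conditional increment is tilted by `exp (f j)`, for
`j < N`. -/
noncomputable def tiltedAlong (P : Measure Ω) (F : Filtration ℕ mΩ) (f : ℕ → Ω → ℝ) (N : ℕ) :
    Measure Ω :=
  P.tilted (compensatedSum P F f N)

lemma IsBoundedIncrement.isProbabilityMeasure_tiltedAlong [IsProbabilityMeasure P]
    (hf : IsBoundedIncrement F f C) : IsProbabilityMeasure (tiltedAlong P F f N) :=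
  isProbabilityMeasure_tilted (hf.integrable_exp_compensatedSum N)

lemma tiltedAlong_zero [IsProbabilityMeasure P] : tiltedAlong P F 0 N = P := by
  have hzero : compensatedSum P F 0 N = 0 := by
    ext ω
    simp [compensatedSum, condCumulant, condExp_const (F.le _)]
  rw [tiltedAlong, hzero, tilted_zero]

lemma IsBoundedIncrement.tiltedAlong_real_apply [IsProbabilityMeasure P]
    (hf : IsBoundedIncrement F f C) (s : Set Ω) :
    (tiltedAlong P F f N).real s = ∫ ω in s, exp (compensatedSum P F f N ω) ∂P := by
  rw [measureReal_def, tiltedAlong, tilted_apply_eq_ofReal_integral,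
    hf.integral_exp_compensatedSum, ENNReal.toReal_ofReal (by positivity)]
  simp only [div_one]

/-- The density is at most `exp (b - t)` times the density of the tilting by `f + g`. -/
lemma IsBoundedIncrement.tiltedAlong_real_le_exp [IsProbabilityMeasure P]
    (hf : IsBoundedIncrement F f C) (hg : IsBoundedIncrement F g D)
    (hb : ∀ᵐ ω ∂P, ∑ j ∈ range N,
      (condCumulant P (F j) (f j + g j) ω - condCumulant P (F j) (f j) ω) ≤ b) (t : ℝ) :
    (tiltedAlong P F f N).real {ω | t ≤ ∑ j ∈ range N, g j ω} ≤ exp (b - t) := by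
  set s := {ω | t ≤ ∑ j ∈ range N, g j ω}
  have hs : MeasurableSet s :=
    measurableSet_le measurable_const (measurable_fun_sum _ fun j _ => hg.measurable j)
  have hint := ((hf.add hg).integrable_exp_compensatedSum (P := P) N).const_mul (exp (b - t))
  have hdensity : ∀ᵐ ω ∂P, ω ∈ s → exp (compensatedSum P F f N ω) ≤
      exp (b - t) * exp (compensatedSum P F (f + g) N ω) := by
    filter_upwards [hb] with ω hω (ht : t ≤ _)
    rw [← exp_add, exp_le_exp]
    simp only [compensatedSum, sum_sub_distrib, Pi.add_apply, sum_add_distrib] at hω ⊢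
    linarith
  calc (tiltedAlong P F f N).real s = ∫ ω in s, exp (compensatedSum P F f N ω) ∂P :=
        hf.tiltedAlong_real_apply s
    _ ≤ ∫ ω in s, exp (b - t) * exp (compensatedSum P F (f + g) N ω) ∂P :=
        setIntegral_mono_on_ae (hf.integrable_exp_compensatedSum N).integrableOn
          hint.integrableOn hs hdensity
    _ ≤ ∫ ω, exp (b - t) * exp (compensatedSum P F (f + g) N ω) ∂P :=
        setIntegral_le_integral hint (ae_of_all _ fun ω => by positivity)
    _ = exp (b - t) := by
        rw [integral_const_mul, (hf.add hg).integral_exp_compensatedSum, mul_one]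

lemma IsBoundedIncrement.tiltedAlong_real_le_exp_mul [IsProbabilityMeasure P]
    (hf : IsBoundedIncrement F f C) {s : Set Ω} (hs : MeasurableSet s)
    (hc : ∀ᵐ ω ∂P, ω ∈ s → compensatedSum P F f N ω ≤ c) :
    (tiltedAlong P F f N).real s ≤ exp c * P.real s := by
  calc (tiltedAlong P F f N).real s = ∫ ω in s, exp (compensatedSum P F f N ω) ∂P :=
        hf.tiltedAlong_real_apply s
    _ ≤ ∫ _ω in s, exp c ∂P :=
        setIntegral_mono_on_ae (hf.integrable_exp_compensatedSum N).integrableOn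
          (integrable_const _).integrableOn hs (hc.mono fun ω h hω => exp_le_exp.2 (h hω))
    _ = exp c * P.real s := by rw [setIntegral_const, smul_eq_mul, mul_comm]

end ExponentialTilting

section TruncatedQuadratic

variable {l s u ρ η r x : ℝ}

/-- The function `x ↦ l x + s x²` on `[-1, 1]`, continued by the constant `u`: by additivity in
`(l, s, u)` it records simultaneously the truncated sum, the truncated quadratic variation and the
number of jumps larger than `1`. -/
noncomputable def truncQuad (l s u x : ℝ) : ℝ := if |x| ≤ 1 then l * x + s * x ^ 2 else u

lemma truncQuad_add (l s u l' s' u' x : ℝ) :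
    truncQuad l s u x + truncQuad l' s' u' x = truncQuad (l + l') (s + s') (u + u') x := by
  unfold truncQuad
  split_ifs <;> ring

lemma truncQuad_mul (c l s u x : ℝ) :
    truncQuad (c * l) (c * s) (c * u) x = c * truncQuad l s u x := by
  unfold truncQuad
  split_ifs <;> ring

lemma sum_truncQuad_mul {κ : Type*} (c l s u : ℝ) (J : Finset κ) (z : κ → ℝ) :
    ∑ j ∈ J, truncQuad (c * l) (c * s) (c * u) (z j) = c * ∑ j ∈ J, truncQuad l s u (z j) := by
  simp only [truncQuad_mul, mul_sum]

@[simp] lemma truncQuad_zero (x : ℝ) : truncQuad 0 0 0 x = 0 := by simp [truncQuad]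

lemma measurable_truncQuad (l s u : ℝ) : Measurable (truncQuad l s u) := by
  refine Measurable.ite (measurableSet_le ?_ measurable_const) ?_ measurable_const <;> fun_prop

lemma abs_mul_add_mul_sq_le (hx : |x| ≤ 1) : |l * x + s * x ^ 2| ≤ (|l| + |s|) * |x| := by
  calc |l * x + s * x ^ 2| ≤ |l| * |x| + |s| * (|x| * |x|) := by
        rw [← abs_mul, ← abs_mul, ← abs_mul, ← sq]
        exact abs_add_le _ _
    _ ≤ |l| * |x| + |s| * (|x| * 1) := by gcongr
    _ = (|l| + |s|) * |x| := by ring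

lemma abs_truncQuad_le (l s u x : ℝ) : |truncQuad l s u x| ≤ |l| + |s| + |u| := by
  unfold truncQuad
  split_ifs with hx
  · have hA : 0 ≤ |l| + |s| := by positivity
    linarith [abs_mul_add_mul_sq_le (l := l) (s := s) hx, mul_le_of_le_one_right hA hx,
      abs_nonneg u]
  · linarith [abs_nonneg l, abs_nonneg s]

lemma abs_exp_sub_one_sub_le (x : ℝ) : |exp x - (1 + x + x ^ 2 / 2)| ≤ |x| ^ 3 * exp |x| := by
  have h := Complex.norm_exp_sub_sum_le_norm_mul_exp (x : ℂ) 3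
  simp only [sum_range_succ, range_zero, sum_empty, Nat.factorial] at h
  rw [Complex.norm_real, norm_eq_abs] at h
  rw [← norm_eq_abs, ← Complex.norm_real]
  convert h using 2
  push_cast
  ring

lemma sq_le_rpow_mul_abs_rpow (hρ : 0 < ρ) (hr : 0 < r) (hx : r ≤ |x|) :
    x ^ 2 ≤ r ^ (-ρ) * |x| ^ (2 + ρ) := by
  have hpos : 0 < |x| := hr.trans_le hx
  have hratio : 1 ≤ r ^ (-ρ) * |x| ^ ρ := by
    rw [rpow_neg hr.le, ← div_eq_inv_mul, ← div_rpow hpos.le hr.le]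
    exact one_le_rpow ((one_le_div hr).2 hx) hρ.le
  calc x ^ 2 = |x| ^ 2 * 1 := by rw [sq_abs, mul_one]
    _ ≤ |x| ^ 2 * (r ^ (-ρ) * |x| ^ ρ) := by gcongr
    _ = r ^ (-ρ) * |x| ^ (2 + ρ) := by rw [rpow_add hpos, rpow_two]; ring

lemma min_cube_sq_le (hρ : 0 < ρ) (hη : 0 < η) (x : ℝ) :
    min (|x| ^ 3) (x ^ 2) ≤ η * x ^ 2 + η ^ (-ρ) * |x| ^ (2 + ρ) := by
  rcases le_total |x| η with hx | hx
  · refine (min_le_left _ _).trans ?_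
    have hcube : |x| ^ 3 ≤ η * x ^ 2 := by
      rw [pow_succ', sq_abs]
      gcongr
    linarith [show 0 ≤ η ^ (-ρ) * |x| ^ (2 + ρ) by positivity]
  · refine (min_le_right _ _).trans ?_
    linarith [sq_le_rpow_mul_abs_rpow hρ hη hx, show 0 ≤ η * x ^ 2 by positivity]

lemma sq_le_add_rpow (hρ : 0 < ρ) (hr : 0 < r) (x : ℝ) :
    x ^ 2 ≤ r ^ 2 + r ^ (-ρ) * |x| ^ (2 + ρ) := by
  rcases le_total |x| r with hx | hx
  · linarith [sq_le_sq' (abs_le.1 hx).1 (abs_le.1 hx).2,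
      show 0 ≤ r ^ (-ρ) * |x| ^ (2 + ρ) by positivity]
  · linarith [sq_le_rpow_mul_abs_rpow hρ hr hx, sq_nonneg r]

lemma abs_exp_mul_add_mul_sq_sub_le (l s : ℝ) (hx : |x| ≤ 1) :
    |exp (l * x + s * x ^ 2) - (1 + l * x + (l ^ 2 / 2 + s) * x ^ 2)| ≤
      ((|l| + |s|) ^ 3 * exp (|l| + |s|) + (|l| * |s| + s ^ 2)) * |x| ^ 3 := by
  set w := l * x + s * x ^ 2
  have hw : |w| ≤ (|l| + |s|) * |x| := abs_mul_add_mul_sq_le hx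
  have hexp : |exp w - (1 + w + w ^ 2 / 2)| ≤ (|l| + |s|) ^ 3 * exp (|l| + |s|) * |x| ^ 3 := by
    calc |exp w - (1 + w + w ^ 2 / 2)| ≤ |w| ^ 3 * exp |w| := abs_exp_sub_one_sub_le w
      _ ≤ ((|l| + |s|) * |x|) ^ 3 * exp (|l| + |s|) := by
        gcongr
        exact hw.trans (mul_le_of_le_one_right (by positivity) hx)
      _ = (|l| + |s|) ^ 3 * exp (|l| + |s|) * |x| ^ 3 := by ring
  have hrest : |l * s * x ^ 3 + s ^ 2 / 2 * x ^ 4| ≤ (|l| * |s| + s ^ 2) * |x| ^ 3 := by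
    calc |l * s * x ^ 3 + s ^ 2 / 2 * x ^ 4|
        ≤ |l| * |s| * |x| ^ 3 + s ^ 2 / 2 * (|x| ^ 3 * |x|) := by
          refine (abs_add_le _ _).trans_eq ?_
          simp only [abs_mul, abs_pow, abs_div, abs_two, sq_abs]
          ring
      _ ≤ |l| * |s| * |x| ^ 3 + s ^ 2 * (|x| ^ 3 * 1) := by
          gcongr
          exact half_le_self (sq_nonneg s)
      _ = (|l| * |s| + s ^ 2) * |x| ^ 3 := by ring
  calc |exp w - (1 + l * x + (l ^ 2 / 2 + s) * x ^ 2)|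
      = |(exp w - (1 + w + w ^ 2 / 2)) + (l * s * x ^ 3 + s ^ 2 / 2 * x ^ 4)| := by
        congr 1
        simp only [w]
        ring
    _ ≤ _ := (abs_add_le _ _).trans (by linarith)

lemma exists_abs_exp_truncQuad_sub_le_min (l s u : ℝ) :
    ∃ K, 0 < K ∧ ∀ x, |exp (truncQuad l s u x) - (1 + l * x + (l ^ 2 / 2 + s) * x ^ 2)| ≤
      K * min (|x| ^ 3) (x ^ 2) := by
  set K₁ := (|l| + |s|) ^ 3 * exp (|l| + |s|) + (|l| * |s| + s ^ 2)
  set K₂ := exp u + 1 + |l| + |l ^ 2 / 2 + s|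
  have hK₁ : 0 ≤ K₁ := by positivity
  have hK₂ : 0 < K₂ := by positivity
  refine ⟨K₁ + K₂, by positivity, fun x => ?_⟩
  unfold truncQuad
  split_ifs with hx
  · have hmin : min (|x| ^ 3) (x ^ 2) = |x| ^ 3 :=
      min_eq_left ((pow_le_pow_of_le_one (abs_nonneg x) hx (by norm_num)).trans_eq (sq_abs x))
    rw [hmin]
    exact (abs_exp_mul_add_mul_sq_sub_le l s hx).trans
      (mul_le_mul_of_nonneg_right (le_add_of_nonneg_right hK₂.le) (by positivity))
  · rw [not_le] at hx
    have hsq : |x| ≤ x ^ 2 := (le_self_pow₀ hx.le two_ne_zero).trans_eq (sq_abs x)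
    have hmin : min (|x| ^ 3) (x ^ 2) = x ^ 2 :=
      min_eq_right ((sq_abs x).symm.trans_le (pow_le_pow_right₀ hx.le (by norm_num)))
    have hone : 1 ≤ x ^ 2 := hx.le.trans hsq
    rw [hmin]
    calc |exp u - (1 + l * x + (l ^ 2 / 2 + s) * x ^ 2)|
        ≤ exp u + (1 + |l| * |x| + |l ^ 2 / 2 + s| * x ^ 2) := by
          refine (abs_sub _ _).trans (add_le_add (abs_of_pos (exp_pos u)).le ?_)
          refine (abs_add_three _ _ _).trans_eq ?_
          rw [abs_one, abs_mul, abs_mul, abs_sq]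
      _ ≤ exp u * x ^ 2 + (1 * x ^ 2 + |l| * x ^ 2 + |l ^ 2 / 2 + s| * x ^ 2) := by
          gcongr
          · exact le_mul_of_one_le_right (exp_pos u).le hone
          · linarith
      _ = K₂ * x ^ 2 := by ring
      _ ≤ (K₁ + K₂) * x ^ 2 := by gcongr; linarith

lemma exists_abs_exp_truncQuad_sub_le (l s u : ℝ) (hρ : 0 < ρ) (hη : 0 < η) :
    ∃ K, 0 ≤ K ∧ ∀ x, |exp (truncQuad l s u x) - (1 + l * x + (l ^ 2 / 2 + s) * x ^ 2)| ≤
      η * x ^ 2 + K * |x| ^ (2 + ρ) := by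
  obtain ⟨K, hK, hbound⟩ := exists_abs_exp_truncQuad_sub_le_min l s u
  refine ⟨K * (η / K) ^ (-ρ), by positivity, fun x => (hbound x).trans ?_⟩
  calc K * min (|x| ^ 3) (x ^ 2)
      ≤ K * (η / K * x ^ 2 + (η / K) ^ (-ρ) * |x| ^ (2 + ρ)) := by
        gcongr
        exact min_cube_sq_le hρ (by positivity) x
    _ = η * x ^ 2 + K * (η / K) ^ (-ρ) * |x| ^ (2 + ρ) := by field_simp

end TruncatedQuadratic

section OneStep

lemma sub_sq_le_log {p C : ℝ} (hp : exp (-C) ≤ p) : p - 1 - exp C * (p - 1) ^ 2 ≤ log p := by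
  have hpos : 0 < p := (exp_pos _).trans_le hp
  have hinv : p⁻¹ ≤ exp C := by
    rw [exp_neg] at hp
    exact inv_le_of_inv_le₀ (exp_pos C) hp
  calc p - 1 - exp C * (p - 1) ^ 2 ≤ p - 1 - p⁻¹ * (p - 1) ^ 2 := by gcongr
    _ = 1 - p⁻¹ := by field_simp; ring
    _ ≤ log p := one_sub_inv_le_log_of_pos hpos

lemma abs_log_sub_le {p q C η τ K L V M : ℝ} (hp : p ∈ Set.Icc (exp (-C)) (exp C))
    (hexp : |p - (1 + q * V)| ≤ η * V + K * M) (hVM : V ≤ τ + L * M) (hη : 0 ≤ η) (hτ : 0 ≤ τ)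
    (hK : 0 ≤ K) (hL : 0 ≤ L) (hV : 0 ≤ V) (hM : 0 ≤ M) :
    |log p - q * V| ≤ (η + exp C * ((|q| + η) ^ 2 * τ)) * V +
      (K + exp C * ((|q| + η) * τ * K + ((|q| + η) * L + K) * exp C)) * M := by
  set a := |q| + η
  have : 0 ≤ a := by positivity
  have hC : 1 ≤ exp C := by
    have h := exp_le_exp.1 (hp.1.trans hp.2)
    exact one_le_exp (by linarith)
  have hbounded : |p - 1| ≤ exp C :=
    abs_le.2 ⟨by linarith [hp.1, exp_pos (-C)], by linarith [hp.2]⟩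
  have hlinear : |p - 1| ≤ a * V + K * M := by
    calc |p - 1| = |(p - (1 + q * V)) + q * V| := by congr 1; ring
      _ ≤ (η * V + K * M) + |q| * V :=
        (abs_add_le _ _).trans (add_le_add hexp (by rw [abs_mul, abs_of_nonneg hV]))
      _ = a * V + K * M := by ring
  have hsq : (p - 1) ^ 2 ≤ a * τ * (a * V + K * M) + (a * L + K) * M * exp C := by
    calc (p - 1) ^ 2 = |p - 1| * |p - 1| := by rw [← sq, sq_abs]
      _ ≤ |p - 1| * (a * (τ + L * M) + K * M) := by
        gcongr
        exact hlinear.trans (by gcongr)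
      _ = a * τ * |p - 1| + (a * L + K) * M * |p - 1| := by ring
      _ ≤ a * τ * (a * V + K * M) + (a * L + K) * M * exp C := by gcongr
  have hsqC := mul_le_mul_of_nonneg_left hsq (exp_pos C).le
  have hpos : 0 ≤ exp C * (a * τ * (a * V + K * M) + (a * L + K) * M * exp C) := by positivity
  have hupper := log_le_sub_one_of_pos ((exp_pos _).trans_le hp.1)
  have hlower := sub_sq_le_log hp.1
  obtain ⟨h₁, h₂⟩ := abs_le.1 hexp
  exact abs_le.2 ⟨by linarith, by linarith⟩

universe v

variable {Ω : Type v} {m mΩ : MeasurableSpace Ω} {P : Measure Ω} {Z : Ω → ℝ} {ρ η : ℝ}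

lemma integrable_sq_of_integrable_rpow [IsFiniteMeasure P] (hρ : 0 < ρ)
    (hZ : AEStronglyMeasurable Z P) (hint : Integrable (fun ω => |Z ω| ^ (2 + ρ)) P) :
    Integrable (fun ω => Z ω ^ 2) P := by
  refine ((integrable_const 1).add hint).mono' (hZ.pow 2) (ae_of_all _ fun ω => ?_)
  have h := sq_le_add_rpow hρ one_pos (Z ω)
  rw [one_pow, one_rpow, one_mul] at h
  rwa [norm_of_nonneg (sq_nonneg _)]

lemma integrable_of_integrable_rpow [IsFiniteMeasure P] (hρ : 0 < ρ)
    (hZ : AEStronglyMeasurable Z P) (hint : Integrable (fun ω => |Z ω| ^ (2 + ρ)) P) :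
    Integrable Z P :=
  ((memLp_two_iff_integrable_sq hZ).2 (integrable_sq_of_integrable_rpow hρ hZ hint)).integrable
    one_le_two

lemma integrable_quadratic_add_rpow [IsFiniteMeasure P] (hρ : 0 < ρ)
    (hZ : AEStronglyMeasurable Z P) (hint : Integrable (fun ω => |Z ω| ^ (2 + ρ)) P)
    (c l q k : ℝ) :
    Integrable (fun ω => c + l * Z ω + q * Z ω ^ 2 + k * |Z ω| ^ (2 + ρ)) P :=
  (((integrable_const c).add ((integrable_of_integrable_rpow hρ hZ hint).const_mul l)).add
    ((integrable_sq_of_integrable_rpow hρ hZ hint).const_mul q)).add (hint.const_mul k)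

lemma condExp_quadratic_add_rpow [IsFiniteMeasure P] (hm : m ≤ mΩ) (hρ : 0 < ρ)
    (hZ : AEStronglyMeasurable Z P) (hint : Integrable (fun ω => |Z ω| ^ (2 + ρ)) P)
    (hmean : P[Z | m] =ᵐ[P] 0) (c l q k : ℝ) :
    P[fun ω => c + l * Z ω + q * Z ω ^ 2 + k * |Z ω| ^ (2 + ρ) | m] =ᵐ[P] fun ω =>
      c + q * (P[fun ω' => Z ω' ^ 2 | m]) ω + k * (P[fun ω' => |Z ω'| ^ (2 + ρ) | m]) ω := by
  have hZ₁ := (integrable_of_integrable_rpow hρ hZ hint).const_mul l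
  have hZ₂ := (integrable_sq_of_integrable_rpow hρ hZ hint).const_mul q
  have hc := integrable_const (μ := P) c
  filter_upwards [condExp_add ((hc.add hZ₁).add hZ₂) (hint.const_mul k) m,
    condExp_add (hc.add hZ₁) hZ₂ m, condExp_add hc hZ₁ m, condExp_smul (μ := P) l Z m,
    condExp_smul (μ := P) q (fun ω => Z ω ^ 2) m,
    condExp_smul (μ := P) k (fun ω => |Z ω| ^ (2 + ρ)) m, hmean] with ω h₁ h₂ h₃ hl hq hk hzero
  rw [Pi.smul_apply, hzero, Pi.zero_apply, smul_zero] at hl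
  have hconst : (P[fun _ => c | m]) ω = c := by rw [condExp_const hm]
  refine h₁.trans ?_
  rw [Pi.add_apply, h₂, Pi.add_apply, h₃, Pi.add_apply, hconst]
  refine congrArg₂ _ (congrArg₂ _ ?_ hq) hk
  exact (congrArg₂ _ rfl hl).trans (add_zero c)

lemma abs_condExp_exp_sub_le [IsFiniteMeasure P] (hm : m ≤ mΩ) (hρ : 0 < ρ)
    (hZ : AEStronglyMeasurable Z P) (hint : Integrable (fun ω => |Z ω| ^ (2 + ρ)) P)
    (hmean : P[Z | m] =ᵐ[P] 0) {f : ℝ → ℝ} {l q K : ℝ}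
    (hf : Integrable (fun ω => exp (f (Z ω))) P)
    (hexp : ∀ x, |exp (f x) - (1 + l * x + q * x ^ 2)| ≤ η * x ^ 2 + K * |x| ^ (2 + ρ)) :
    ∀ᵐ ω ∂P, |(P[fun ω' => exp (f (Z ω')) | m]) ω - (1 + q * (P[fun ω' => Z ω' ^ 2 | m]) ω)| ≤
      η * (P[fun ω' => Z ω' ^ 2 | m]) ω + K * (P[fun ω' => |Z ω'| ^ (2 + ρ) | m]) ω := by
  have hquad := integrable_quadratic_add_rpow hρ hZ hint
  have hupper := condExp_mono (m := m) hf (hquad 1 l (q + η) K)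
    (ae_of_all _ fun ω => by linarith [(abs_le.1 (hexp (Z ω))).2])
  have hlower := condExp_mono (m := m) (hquad 1 l (q - η) (-K)) hf
    (ae_of_all _ fun ω => by linarith [(abs_le.1 (hexp (Z ω))).1])
  have hcond := condExp_quadratic_add_rpow hm hρ hZ hint hmean
  filter_upwards [hupper, hlower, hcond 1 l (q + η) K, hcond 1 l (q - η) (-K)]
    with ω h₁ h₂ h₃ h₄
  rw [h₃] at h₁
  rw [h₄] at h₂
  exact abs_le.2 ⟨by linarith, by linarith⟩

lemma condExp_sq_le [IsFiniteMeasure P] (hm : m ≤ mΩ) (hρ : 0 < ρ)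
    (hZ : AEStronglyMeasurable Z P) (hint : Integrable (fun ω => |Z ω| ^ (2 + ρ)) P)
    {r : ℝ} (hr : 0 < r) :
    ∀ᵐ ω ∂P, (P[fun ω' => Z ω' ^ 2 | m]) ω ≤
      r ^ 2 + r ^ (-ρ) * (P[fun ω' => |Z ω'| ^ (2 + ρ) | m]) ω := by
  have hmono := condExp_mono (m := m) (integrable_sq_of_integrable_rpow hρ hZ hint)
    ((integrable_const (r ^ 2)).add (hint.const_mul (r ^ (-ρ))))
    (ae_of_all _ fun ω => sq_le_add_rpow hρ hr (Z ω))
  filter_upwards [hmono, condExp_add (integrable_const (r ^ 2)) (hint.const_mul (r ^ (-ρ))) m,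
    condExp_smul (μ := P) (r ^ (-ρ)) (fun ω => |Z ω| ^ (2 + ρ)) m] with ω h hadd hsmul
  rw [hadd, Pi.add_apply, condExp_const hm] at h
  exact h.trans_eq (congrArg _ hsmul)

lemma exists_abs_condCumulant_truncQuad_sub_le (l s u : ℝ) (hρ : 0 < ρ) (hη : 0 < η) :
    ∃ K, 0 ≤ K ∧ ∀ {Ω : Type v} {m mΩ : MeasurableSpace Ω} {P : Measure Ω}
      [IsProbabilityMeasure P] {Z : Ω → ℝ}, m ≤ mΩ → AEStronglyMeasurable Z P →
      Integrable (fun ω => |Z ω| ^ (2 + ρ)) P → P[Z | m] =ᵐ[P] 0 →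
      ∀ᵐ ω ∂P, |condCumulant P m (fun ω' => truncQuad l s u (Z ω')) ω -
        (l ^ 2 / 2 + s) * (P[fun ω' => Z ω' ^ 2 | m]) ω| ≤
          η * (P[fun ω' => Z ω' ^ 2 | m]) ω + K * (P[fun ω' => |Z ω'| ^ (2 + ρ) | m]) ω := by
  obtain ⟨K, hK, hexp⟩ := exists_abs_exp_truncQuad_sub_le l s u hρ (half_pos hη)
  set C := |l| + |s| + |u|
  set a := |l ^ 2 / 2 + s| + η / 2
  have ha : 0 < a := by positivity
  set r := √(η / 2 / (exp C * a ^ 2))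
  have hr : 0 < r := by positivity
  have hrsq : exp C * (a ^ 2 * r ^ 2) = η / 2 := by
    rw [sq_sqrt (by positivity)]
    field_simp
  refine ⟨K + exp C * (a * r ^ 2 * K + (a * r ^ (-ρ) + K) * exp C), by positivity, ?_⟩
  intro Ω m mΩ P _ Z hm hZ hint hmean
  have hmeas : AEStronglyMeasurable (fun ω => truncQuad l s u (Z ω)) P :=
    ((measurable_truncQuad l s u).comp_aemeasurable hZ.aemeasurable).aestronglyMeasurable
  have hbound : ∀ᵐ ω ∂P, |truncQuad l s u (Z ω)| ≤ C :=
    ae_of_all _ fun ω => abs_truncQuad_le l s u (Z ω)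
  filter_upwards [condExp_exp_mem_Icc hm hmeas hbound,
    abs_condExp_exp_sub_le hm hρ hZ hint hmean (integrable_exp_of_abs_le hmeas hbound) hexp,
    condExp_sq_le hm hρ hZ hint hr,
    condExp_nonneg (m := m) (ae_of_all P fun ω => sq_nonneg (Z ω)),
    condExp_nonneg (m := m) (ae_of_all P fun ω => rpow_nonneg (abs_nonneg (Z ω)) (2 + ρ))]
    with ω hp hexpω hVM hV hM
  have h := abs_log_sub_le hp hexpω hVM (by positivity) (by positivity) hK (by positivity) hV hM
  rwa [hrsq, add_halves] at h

end OneStep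

section NormalizedArray

universe v

variable {Ω : Type v} {mΩ : MeasurableSpace Ω}

/-- The predictable compensator `∑ E[g j | F j]` of the sum of the first `N` terms of `g`. -/
noncomputable def compensator (P : Measure Ω) (F : Filtration ℕ mΩ) (g : ℕ → Ω → ℝ) (N : ℕ) :
    Ω → ℝ :=
  fun ω => ∑ j ∈ range N, (P[g j | F j]) ω

/-- The process `∑ truncQuad l s u (Z j)` attached to a sequence `Z`, given by its increments. -/
noncomputable def truncIncrement (l s u : ℝ) (Z : ℕ → Ω → ℝ) : ℕ → Ω → ℝ :=
  fun j ω => truncQuad l s u (Z j ω)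

lemma truncIncrement_zero (Z : ℕ → Ω → ℝ) : truncIncrement 0 0 0 Z = 0 := by
  ext j ω
  simp [truncIncrement]

lemma truncIncrement_add (l s u l' s' u' : ℝ) (Z : ℕ → Ω → ℝ) :
    truncIncrement l s u Z + truncIncrement l' s' u' Z =
      truncIncrement (l + l') (s + s') (u + u') Z := by
  ext j ω
  exact truncQuad_add ..

lemma isBoundedIncrement_truncIncrement {F : Filtration ℕ mΩ} {Z : ℕ → Ω → ℝ}
    (hZ : ∀ j, StronglyMeasurable[F (j + 1)] (Z j)) (l s u : ℝ) :
    IsBoundedIncrement F (truncIncrement l s u Z) (|l| + |s| + |u|) where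
  stronglyMeasurable j := ((measurable_truncQuad l s u).comp (hZ j).measurable).stronglyMeasurable
  abs_le j ω := abs_truncQuad_le l s u (Z j ω)

/-- The law under which, to first order, `Z j` has conditional mean `y E[(Z j) ^ 2 | F j]`. -/
noncomputable def driftedLaw (P : Measure Ω) (F : Filtration ℕ mΩ) (Z : ℕ → Ω → ℝ) (y : ℝ) (N : ℕ) :
    Measure Ω :=
  tiltedAlong P F (truncIncrement y 0 0 Z) N

variable {ι : Type*} {𝓁 : Filter ι} {Ω : ι → Type v} {mΩ : ∀ i, MeasurableSpace (Ω i)}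
  {P : ∀ i, Measure (Ω i)} {F : ∀ i, Filtration ℕ (mΩ i)} {N : ι → ℕ} {Z : ∀ i, ℕ → Ω i → ℝ}
  {ρ η : ℝ} {a : ι → ℝ}

/-- An array of martingale differences, the `i`-th row being `Z i j` for `j < N i`, normalized so
that its conditional variance is asymptotically `a i ^ 2`, with conditional moments of order `2 + ρ`
of smaller order. The entries with `j ≥ N i` are irrelevant and may be taken to be zero. -/
structure IsNormalizedArray (𝓁 : Filter ι) (P : ∀ i, Measure (Ω i)) (F : ∀ i, Filtration ℕ (mΩ i))
    (N : ι → ℕ) (Z : ∀ i, ℕ → Ω i → ℝ) (ρ : ℝ) (a : ι → ℝ) : Prop where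
  stronglyMeasurable : ∀ i j, StronglyMeasurable[F i (j + 1)] (Z i j)
  integrable : ∀ i j, Integrable (fun ω => |Z i j ω| ^ (2 + ρ)) (P i)
  condExp_eq_zero : ∀ i j, (P i)[Z i j | F i j] =ᵐ[P i] 0
  sq_compensator : ∀ η > 0, ∀ᶠ i in 𝓁, ∀ᵐ ω ∂P i,
    |compensator (P i) (F i) (fun j ω' => Z i j ω' ^ 2) (N i) ω - a i ^ 2| ≤ η * a i ^ 2
  rpow_compensator : ∀ η > 0, ∀ᶠ i in 𝓁, ∀ᵐ ω ∂P i,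
    compensator (P i) (F i) (fun j ω' => |Z i j ω'| ^ (2 + ρ)) (N i) ω ≤ η * a i ^ 2

namespace IsNormalizedArray

lemma neg (h : IsNormalizedArray 𝓁 P F N Z ρ a) :
    IsNormalizedArray 𝓁 P F N (fun i j ω => -Z i j ω) ρ a where
  stronglyMeasurable i j := (h.stronglyMeasurable i j).neg
  integrable i j := by simpa only [abs_neg] using h.integrable i j
  condExp_eq_zero i j := by
    filter_upwards [condExp_neg (μ := P i) (Z i j) (F i j), h.condExp_eq_zero i j] with ω h₁ h₂
    exact h₁.trans (by rw [Pi.neg_apply, h₂, Pi.zero_apply, neg_zero])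
  sq_compensator := by simpa only [neg_sq] using h.sq_compensator
  rpow_compensator := by simpa only [abs_neg] using h.rpow_compensator

lemma measurable (h : IsNormalizedArray 𝓁 P F N Z ρ a) (i : ι) (j : ℕ) : Measurable (Z i j) :=
  ((h.stronglyMeasurable i j).mono ((F i).le _)).measurable

lemma isBoundedIncrement (h : IsNormalizedArray 𝓁 P F N Z ρ a) (l s u : ℝ) (i : ι) :
    IsBoundedIncrement (F i) (truncIncrement l s u (Z i)) (|l| + |s| + |u|) :=
  isBoundedIncrement_truncIncrement (h.stronglyMeasurable i) l s u

variable [∀ i, IsProbabilityMeasure (P i)]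

lemma isProbabilityMeasure_driftedLaw (h : IsNormalizedArray 𝓁 P F N Z ρ a) (y : ℝ) (i : ι) :
    IsProbabilityMeasure (driftedLaw (P i) (F i) (Z i) y (N i)) :=
  (h.isBoundedIncrement y 0 0 i).isProbabilityMeasure_tiltedAlong

lemma eventually_abs_sum_condCumulant_sub_le (h : IsNormalizedArray 𝓁 P F N Z ρ a) (hρ : 0 < ρ)
    (l s u : ℝ) (hη : 0 < η) :
    ∀ᶠ i in 𝓁, ∀ᵐ ω ∂P i,
      |∑ j ∈ range (N i), condCumulant (P i) (F i j) (truncIncrement l s u (Z i) j) ω -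
        (l ^ 2 / 2 + s) * a i ^ 2| ≤ η * a i ^ 2 := by
  obtain ⟨K, hK, hstep⟩ := exists_abs_condCumulant_truncQuad_sub_le.{v} l s u hρ
    (show 0 < η / 4 by positivity)
  set q := l ^ 2 / 2 + s
  set δ := η / (2 * (K + |q| + η))
  have hδ : (K + |q| + η) * δ = η / 2 := by simp only [δ]; field_simp
  have hδpos : 0 < δ := by positivity
  filter_upwards [h.sq_compensator δ hδpos, h.rpow_compensator δ hδpos] with i hsq hrpow
  have hsteps := ae_all_iff.2 fun j => hstep ((F i).le j) (h.measurable i j).aestronglyMeasurable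
    (h.integrable i j) (h.condExp_eq_zero i j)
  filter_upwards [hsq, hrpow, hsteps] with ω hV hM hω
  set V := compensator (P i) (F i) (fun j ω' => Z i j ω' ^ 2) (N i) ω
  set M := compensator (P i) (F i) (fun j ω' => |Z i j ω'| ^ (2 + ρ)) (N i) ω
  set Λ := ∑ j ∈ range (N i), condCumulant (P i) (F i j) (truncIncrement l s u (Z i) j) ω
  have hΛ : |Λ - q * V| ≤ η / 4 * V + K * M := by
    simp only [Λ, V, M, compensator, mul_sum, ← sum_sub_distrib, ← sum_add_distrib]
    exact (abs_sum_le_sum_abs _ _).trans (sum_le_sum fun j _ => hω j)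
  have hVle : V ≤ (1 + δ) * a i ^ 2 := by linarith [(abs_le.1 hV).2]
  calc |Λ - q * a i ^ 2| ≤ |Λ - q * V| + |q| * |V - a i ^ 2| := by
        rw [← abs_mul, mul_sub]
        exact abs_sub_le _ _ _
    _ ≤ (η / 4 * ((1 + δ) * a i ^ 2) + K * (δ * a i ^ 2)) + |q| * (δ * a i ^ 2) := by
        gcongr
        exact hΛ.trans (by gcongr)
    _ = (η / 4 * (1 + δ) + ((K + |q| + η) * δ - η * δ)) * a i ^ 2 := by ring
    _ ≤ η * a i ^ 2 := by
        rw [hδ]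
        gcongr
        linarith [mul_pos hη hδpos]

/-- To first order, `θ * l * y + (θ * l) ^ 2 / 2` is the cumulant at `θ * l` of the Gaussian law of
mean `y` and variance `1`. -/
lemma eventually_driftedLaw_le_exp (h : IsNormalizedArray 𝓁 P F N Z ρ a) (hρ : 0 < ρ)
    (y l s u : ℝ) {θ : ℝ} (hθ : 0 ≤ θ) (hη : 0 < η) :
    ∀ᶠ i in 𝓁, ∀ t, (driftedLaw (P i) (F i) (Z i) y (N i)).real
      {ω | t ≤ ∑ j ∈ range (N i), truncQuad l s u (Z i j ω)} ≤
        exp ((θ * l * y + (θ * l) ^ 2 / 2 + θ * s + η) * a i ^ 2 - θ * t) := by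
  filter_upwards [h.eventually_abs_sum_condCumulant_sub_le hρ y 0 0 (half_pos hη),
    h.eventually_abs_sum_condCumulant_sub_le hρ (y + θ * l) (0 + θ * s) (0 + θ * u) (half_pos hη)]
    with i hdrift hshift t
  have := h.isProbabilityMeasure_driftedLaw y i
  refine (measureReal_mono fun ω (hω : t ≤ _) => mul_le_mul_of_nonneg_left hω hθ).trans ?_
  simp only [← sum_truncQuad_mul]
  refine (h.isBoundedIncrement y 0 0 i).tiltedAlong_real_le_exp
    (h.isBoundedIncrement (θ * l) (θ * s) (θ * u) i) ?_ _
  filter_upwards [hdrift, hshift] with ω h₁ h₂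
  rw [← truncIncrement_add] at h₂
  rw [sum_sub_distrib]
  simp only [Pi.add_apply] at h₂
  linarith [(abs_le.1 h₁).1, (abs_le.1 h₂).2]

lemma eventually_real_le_exp (h : IsNormalizedArray 𝓁 P F N Z ρ a) (hρ : 0 < ρ)
    (l s u : ℝ) {θ : ℝ} (hθ : 0 ≤ θ) (hη : 0 < η) :
    ∀ᶠ i in 𝓁, ∀ t, (P i).real {ω | t ≤ ∑ j ∈ range (N i), truncQuad l s u (Z i j ω)} ≤
        exp (((θ * l) ^ 2 / 2 + θ * s + η) * a i ^ 2 - θ * t) := by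
  filter_upwards [h.eventually_driftedLaw_le_exp hρ 0 l s u hθ hη] with i hi t
  simpa only [driftedLaw, truncIncrement_zero, tiltedAlong_zero, mul_zero, zero_add] using hi t

end IsNormalizedArray

end NormalizedArray

section SelfNormalizedSum

variable {κ : Type*} {J : Finset κ} {z : κ → ℝ} {a q x η : ℝ}

lemma neg_sq_le_truncQuad (x : ℝ) : -x ^ 2 ≤ truncQuad 0 (-1) 0 x := by
  unfold truncQuad
  split_ifs
  · linarith
  · linarith [sq_nonneg x]

/-- By Cauchy–Schwarz, few large entries contribute little to the self-normalized sum. -/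
lemma sum_le_sum_truncQuad_add (J : Finset κ) (z : κ → ℝ) :
    ∑ j ∈ J, z j ≤ ∑ j ∈ J, truncQuad 1 0 0 (z j) +
      √(∑ j ∈ J, truncQuad 0 0 1 (z j)) * √(∑ j ∈ J, z j ^ 2) := by
  have hsplit : ∑ j ∈ J, z j =
      ∑ j ∈ J, truncQuad 1 0 0 (z j) + ∑ j ∈ J, truncQuad 0 0 1 (z j) * z j := by
    rw [← sum_add_distrib]
    refine sum_congr rfl fun j _ => ?_
    unfold truncQuad
    split_ifs <;> ring
  have hidem : ∀ j, truncQuad 0 0 1 (z j) ^ 2 = truncQuad 0 0 1 (z j) := fun j => by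
    unfold truncQuad
    split_ifs <;> ring
  have hcauchy := sum_mul_le_sqrt_mul_sqrt J (fun j => truncQuad 0 0 1 (z j)) z
  simp only [hidem] at hcauchy
  rw [hsplit]
  gcongr

lemma self_normalized_trichotomy (ha : 0 < a) (hq : 0 < q) (hq1 : q < 1) (hqx : q < x)
    (h : x ≤ (∑ j ∈ J, z j) / (a * √(∑ j ∈ J, z j ^ 2))) :
    q ^ 2 * a ^ 2 ≤ ∑ j ∈ J, truncQuad 0 0 1 (z j) ∨
      -((1 - q) * a ^ 2) ≤ ∑ j ∈ J, truncQuad 0 (-1) 0 (z j) ∨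
      (x - q) * √(1 - q) * a ^ 2 ≤ ∑ j ∈ J, truncQuad 1 0 0 (z j) := by
  by_contra! hcon
  obtain ⟨hjumps, hquad, hsum⟩ := hcon
  set Q := ∑ j ∈ J, z j ^ 2
  have hQ : (1 - q) * a ^ 2 < Q := by
    have hle : -Q ≤ ∑ j ∈ J, truncQuad 0 (-1) 0 (z j) := by
      rw [← sum_neg_distrib]
      exact sum_le_sum fun j _ => neg_sq_le_truncQuad (z j)
    linarith
  have hsqrt : √(1 - q) * a ≤ √Q := by
    rw [← sqrt_sq ha.le, ← sqrt_mul (by linarith)]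
    exact sqrt_le_sqrt hQ.le
  have hQpos : 0 < √Q := lt_of_lt_of_le (by have := sqrt_pos.2 (sub_pos.2 hq1); positivity) hsqrt
  have hjumps' : √(∑ j ∈ J, truncQuad 0 0 1 (z j)) ≤ q * a :=
    sqrt_le_iff.2 ⟨by positivity, by linarith [mul_pow q a 2]⟩
  rw [le_div_iff₀ (by positivity)] at h
  have hlower : (x - q) * a * √Q ≤ ∑ j ∈ J, truncQuad 1 0 0 (z j) := by
    linarith [sum_le_sum_truncQuad_add J z, mul_le_mul_of_nonneg_right hjumps' hQpos.le]
  have hchain : (x - q) * √(1 - q) * a ^ 2 ≤ (x - q) * a * √Q := by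
    calc (x - q) * √(1 - q) * a ^ 2 = (x - q) * a * (√(1 - q) * a) := by ring
      _ ≤ (x - q) * a * √Q := mul_le_mul_of_nonneg_left hsqrt
        (mul_nonneg (by linarith) ha.le)
  exact (hchain.trans hlower).not_gt hsum

lemma exists_lt_sq_mul_sqrt_one_sub (hx : 0 < x) (hη : 0 < η) :
    ∃ q, 0 < q ∧ q < 1 ∧ q < x ∧ x ^ 2 / 2 - η < ((x - q) * √(1 - q)) ^ 2 / 2 := by
  have hcont : ContinuousAt (fun q : ℝ => ((x - q) * √(1 - q)) ^ 2 / 2) 0 := by fun_prop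
  have hlt : x ^ 2 / 2 - η < ((x - 0) * √(1 - 0)) ^ 2 / 2 := by simpa
  have hev : ∀ᶠ q in 𝓝[>] (0 : ℝ),
      x ^ 2 / 2 - η < ((x - q) * √(1 - q)) ^ 2 / 2 ∧ q < 1 ∧ q < x :=
    nhdsWithin_le_nhds ((hcont.eventually (lt_mem_nhds hlt)).and
      ((gt_mem_nhds one_pos).and (gt_mem_nhds hx)))
  obtain ⟨q, ⟨h, hq1, hqx⟩, hq⟩ := (hev.and self_mem_nhdsWithin).exists
  exact ⟨q, hq, hq1, hqx, h⟩

/-- The self-normalized sum `∑ Z j / (a √(∑ (Z j) ^ 2))` of the first `N` terms, on the moderate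
deviation scale `a`; it is `0` where all terms vanish. -/
noncomputable def selfNormalized {Ω : Type*} (Z : ℕ → Ω → ℝ) (N : ℕ) (a : ℝ) : Ω → ℝ :=
  fun ω => (∑ j ∈ range N, Z j ω) / (a * √(∑ j ∈ range N, Z j ω ^ 2))

lemma selfNormalized_neg {Ω : Type*} (Z : ℕ → Ω → ℝ) (N : ℕ) (a : ℝ) (ω : Ω) :
    selfNormalized (fun j ω => -Z j ω) N a ω = -selfNormalized Z N a ω := by
  simp only [selfNormalized, sum_neg_distrib, neg_sq, neg_div]

lemma real_le_selfNormalized_le_add {Ω : Type*} {mΩ : MeasurableSpace Ω} {P : Measure Ω}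
    [IsFiniteMeasure P] (Z : ℕ → Ω → ℝ) (N : ℕ) (ha : 0 < a) (hq : 0 < q) (hq1 : q < 1)
    (hqx : q < x) :
    P.real {ω | x ≤ selfNormalized Z N a ω} ≤
      P.real {ω | q ^ 2 * a ^ 2 ≤ ∑ j ∈ range N, truncQuad 0 0 1 (Z j ω)} +
        P.real {ω | -((1 - q) * a ^ 2) ≤ ∑ j ∈ range N, truncQuad 0 (-1) 0 (Z j ω)} +
          P.real {ω | (x - q) * √(1 - q) * a ^ 2 ≤ ∑ j ∈ range N, truncQuad 1 0 0 (Z j ω)} := by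
  have hcover (ω : Ω) (hω : x ≤ selfNormalized Z N a ω) :=
    self_normalized_trichotomy ha hq hq1 hqx hω
  refine (measureReal_mono hcover).trans ?_
  rw [add_assoc]
  exact (measureReal_union_le _ _).trans (add_le_add_right (measureReal_union_le _ _) _)

end SelfNormalizedSum

section UpperBound

universe v

variable {ι : Type*} {𝓁 : Filter ι} {Ω : ι → Type v} {mΩ : ∀ i, MeasurableSpace (Ω i)}
  {P : ∀ i, Measure (Ω i)} [∀ i, IsProbabilityMeasure (P i)] {F : ∀ i, Filtration ℕ (mΩ i)}
  {N : ι → ℕ} {Z : ∀ i, ℕ → Ω i → ℝ} {ρ x η : ℝ} {a : ι → ℝ}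

lemma IsNormalizedArray.eventually_real_le_selfNormalized_le
    (h : IsNormalizedArray 𝓁 P F N Z ρ a) (hρ : 0 < ρ) (ha : ∀ᶠ i in 𝓁, 0 < a i)
    (hx : 0 < x) (hη : 0 < η) :
    ∀ᶠ i in 𝓁, (P i).real {ω | x ≤ selfNormalized (Z i) (N i) (a i) ω} ≤
      3 * exp (-(a i ^ 2 * (x ^ 2 / 2 - η))) := by
  obtain ⟨q, hq, hq1, hqx, hx'⟩ := exists_lt_sq_mul_sqrt_one_sub hx (half_pos hη)
  set x' := (x - q) * √(1 - q)
  have hx'0 : 0 ≤ x' := mul_nonneg (by linarith) (sqrt_nonneg _)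
  filter_upwards [ha,
    h.eventually_real_le_exp hρ 0 0 1 (show 0 ≤ x ^ 2 / q ^ 2 by positivity) (half_pos hη),
    h.eventually_real_le_exp hρ 0 (-1) 0 (show 0 ≤ x ^ 2 / q by positivity) (half_pos hη),
    h.eventually_real_le_exp hρ 1 0 0 hx'0 (half_pos hη)] with i hi hjumps hquad hsum
  have hx2 : 0 ≤ a i ^ 2 * x ^ 2 := by positivity
  have hη2 : 0 ≤ a i ^ 2 * η := by positivity
  have hbound {e : ℝ} (he : e ≤ -(a i ^ 2 * (x ^ 2 / 2 - η))) :
      exp e ≤ exp (-(a i ^ 2 * (x ^ 2 / 2 - η))) := exp_le_exp.2 he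
  have hqq : x ^ 2 / q ^ 2 * q ^ 2 = x ^ 2 := by field_simp
  have hjumps' := (hjumps (q ^ 2 * a i ^ 2)).trans
    (hbound (by linear_combination (1 / 2) * hx2 + (1 / 2) * hη2 - a i ^ 2 * hqq))
  have hq' : x ^ 2 / q * q = x ^ 2 := by field_simp
  have hquad' := (hquad (-((1 - q) * a i ^ 2))).trans
    (hbound (by linear_combination (1 / 2) * hx2 + (1 / 2) * hη2 - a i ^ 2 * hq'))
  have hsum' := (hsum (x' * a i ^ 2)).trans (hbound (by nlinarith [sq_nonneg (a i)]))
  linarith [real_le_selfNormalized_le_add (P := P i) (Z i) (N i) hi hq hq1 hqx]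

lemma IsNormalizedArray.eventually_real_le_abs_selfNormalized_le
    (h : IsNormalizedArray 𝓁 P F N Z ρ a) (hρ : 0 < ρ) (ha : ∀ᶠ i in 𝓁, 0 < a i)
    (hx : 0 < x) (hη : 0 < η) :
    ∀ᶠ i in 𝓁, (P i).real {ω | x ≤ |selfNormalized (Z i) (N i) (a i) ω|} ≤
      6 * exp (-(a i ^ 2 * (x ^ 2 / 2 - η))) := by
  filter_upwards [h.eventually_real_le_selfNormalized_le hρ ha hx hη,
    h.neg.eventually_real_le_selfNormalized_le hρ ha hx hη] with i hpos hneg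
  simp only [selfNormalized_neg] at hneg
  simp only [le_abs, Set.ofPred_or]
  linarith [measureReal_union_le (μ := P i) {ω | x ≤ selfNormalized (Z i) (N i) (a i) ω}
    {ω | x ≤ -selfNormalized (Z i) (N i) (a i) ω}]

end UpperBound

section JumpSquare

variable {κ : Type*} {J : Finset κ} {z : κ → ℝ} {v : κ → ℝ} {x : ℝ}

/-- The contribution of `x` to the quadratic variation when it is a jump larger than `1`. -/
noncomputable def jumpSq (x : ℝ) : ℝ := if |x| ≤ 1 then 0 else x ^ 2

lemma jumpSq_nonneg (x : ℝ) : 0 ≤ jumpSq x := by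
  unfold jumpSq
  split_ifs <;> positivity

lemma measurable_jumpSq : Measurable jumpSq := by
  refine Measurable.ite (measurableSet_le ?_ measurable_const) measurable_const ?_ <;> fun_prop

lemma truncQuad_add_jumpSq (x : ℝ) : truncQuad 0 1 0 x + jumpSq x = x ^ 2 := by
  unfold truncQuad jumpSq
  split_ifs <;> ring

lemma abs_sub_truncQuad_le_jumpSq (x : ℝ) : |x - truncQuad 1 0 0 x| ≤ jumpSq x := by
  unfold truncQuad jumpSq
  split_ifs with hx
  · simp
  · rw [sub_zero, ← sq_abs]
    exact le_self_pow₀ (not_le.1 hx).le two_ne_zero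

lemma abs_sum_sub_sum_truncQuad_le (J : Finset κ) (z : κ → ℝ) :
    |∑ j ∈ J, z j - ∑ j ∈ J, truncQuad 1 0 0 (z j)| ≤ ∑ j ∈ J, jumpSq (z j) := by
  rw [← sum_sub_distrib]
  exact (abs_sum_le_sum_abs _ _).trans (sum_le_sum fun j _ => abs_sub_truncQuad_le_jumpSq (z j))

lemma jumpSq_le_abs_rpow {ρ : ℝ} (hρ : 0 ≤ ρ) (x : ℝ) : jumpSq x ≤ |x| ^ (2 + ρ) := by
  unfold jumpSq
  split_ifs with hx
  · positivity
  · rw [← sq_abs, ← rpow_two]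
    exact rpow_le_rpow_of_exponent_le (not_le.1 hx).le (by linarith)

lemma one_le_sum_min_one (hv : ∀ j ∈ J, 0 ≤ v j) (h : 1 ≤ ∑ j ∈ J, v j) :
    1 ≤ ∑ j ∈ J, min 1 (v j) := by
  by_cases hlarge : ∃ j ∈ J, 1 ≤ v j
  · obtain ⟨j, hj, hvj⟩ := hlarge
    exact (le_min le_rfl hvj).trans
      (single_le_sum (f := fun j => min 1 (v j)) (fun k hk => le_min zero_le_one (hv k hk)) hj)
  · push Not at hlarge
    rwa [sum_congr rfl fun j hj => min_eq_right (hlarge j hj).le]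

/-- Convexity of `exp` bounds its values on `[0, K]` by the chord. -/
lemma exp_mul_min_one_le {K v : ℝ} (hK : 0 ≤ K) (hv : 0 ≤ v) :
    exp (K * min 1 v) ≤ 1 + (exp K - 1) * v := by
  have hconv := convexOn_exp.2 (Set.mem_univ 0) (Set.mem_univ K)
    (sub_nonneg.2 (min_le_left 1 v)) (le_min zero_le_one hv) (sub_add_cancel _ _)
  simp only [smul_eq_mul, mul_zero, zero_add, exp_zero, mul_one] at hconv
  rw [mul_comm K]
  have hmin : (exp K - 1) * min 1 v ≤ (exp K - 1) * v :=
    mul_le_mul_of_nonneg_left (min_le_right _ _) (sub_nonneg.2 (one_le_exp hK))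
  linarith

lemma exp_truncQuad_add_le {ρ K c : ℝ} (hρ : 0 ≤ ρ) (hK : 0 ≤ K) (hc : 0 < c) (y x : ℝ) :
    exp (truncQuad y 0 0 x + K * min 1 (jumpSq x / c)) ≤
      exp (truncQuad y 0 0 x) + (exp K - 1) / c * |x| ^ (2 + ρ) := by
  have hK' : 0 ≤ exp K - 1 := sub_nonneg.2 (one_le_exp hK)
  by_cases hx : |x| ≤ 1
  · have hjump : jumpSq x = 0 := if_pos hx
    simp only [hjump, zero_div, min_eq_right zero_le_one, mul_zero, add_zero]
    exact le_add_of_nonneg_right (by positivity)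
  · have htrunc : truncQuad y 0 0 x = 0 := if_neg hx
    rw [htrunc, zero_add, exp_zero]
    calc exp (K * min 1 (jumpSq x / c)) ≤ 1 + (exp K - 1) * (jumpSq x / c) :=
          exp_mul_min_one_le hK (div_nonneg (jumpSq_nonneg x) hc.le)
      _ ≤ 1 + (exp K - 1) * (|x| ^ (2 + ρ) / c) := by
          gcongr
          exact jumpSq_le_abs_rpow hρ x
      _ = 1 + (exp K - 1) / c * |x| ^ (2 + ρ) := by ring

end JumpSquare

section LawOfLargeNumbers

universe v

section

variable {Ω : Type v} {mΩ : MeasurableSpace Ω} {F : Filtration ℕ mΩ} {Z : ℕ → Ω → ℝ}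
  {P : Measure Ω} {K c ρ : ℝ}

/-- The process counting the jumps of `Z` larger than `1`, each with weight `jumpSq / c` capped at
`1` and then scaled by `K`; it is given by its increments. -/
noncomputable def cappedJump (K c : ℝ) (Z : ℕ → Ω → ℝ) : ℕ → Ω → ℝ :=
  fun j ω => K * min 1 (jumpSq (Z j ω) / c)

lemma isBoundedIncrement_cappedJump (hZ : ∀ j, StronglyMeasurable[F (j + 1)] (Z j)) (hK : 0 ≤ K)
    (hc : 0 ≤ c) : IsBoundedIncrement F (cappedJump K c Z) K where
  stronglyMeasurable j := by
    have hjump := (measurable_jumpSq.comp (hZ j).measurable).div_const c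
    exact ((measurable_const.min hjump).const_mul K).stronglyMeasurable
  abs_le j ω := by
    have hmin : 0 ≤ min 1 (jumpSq (Z j ω) / c) :=
      le_min zero_le_one (div_nonneg (jumpSq_nonneg _) hc)
    rw [cappedJump, abs_of_nonneg (mul_nonneg hK hmin)]
    exact mul_le_of_le_one_right hK (min_le_left _ _)

lemma le_sum_cappedJump {N : ℕ} {ω : Ω} (hK : 0 ≤ K) (hc : 0 < c)
    (h : c ≤ ∑ j ∈ range N, jumpSq (Z j ω)) : K ≤ ∑ j ∈ range N, cappedJump K c Z j ω := by
  simp only [cappedJump, ← mul_sum]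
  refine le_mul_of_one_le_right hK (one_le_sum_min_one
    (fun j _ => div_nonneg (jumpSq_nonneg _) hc.le) ?_)
  rwa [← sum_div, one_le_div hc]

lemma sum_condCumulant_cappedJump_sub_le [IsProbabilityMeasure P]
    (hZ : ∀ j, StronglyMeasurable[F (j + 1)] (Z j))
    (hint : ∀ j, Integrable (fun ω => |Z j ω| ^ (2 + ρ)) P) (hρ : 0 ≤ ρ) (hK : 0 ≤ K) (hc : 0 < c)
    (y : ℝ) (N : ℕ) :
    ∀ᵐ ω ∂P, ∑ j ∈ range N,
      (condCumulant P (F j) (truncIncrement y 0 0 Z j + cappedJump K c Z j) ω -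
        condCumulant P (F j) (truncIncrement y 0 0 Z j) ω) ≤
      exp |y| * ((exp K - 1) / c) * compensator P F (fun j ω' => |Z j ω'| ^ (2 + ρ)) N ω := by
  have hK' : 0 ≤ exp K - 1 := sub_nonneg.2 (one_le_exp hK)
  have hf := isBoundedIncrement_truncIncrement hZ y 0 0
  have hg := hf.add (isBoundedIncrement_cappedJump hZ hK hc.le)
  have hstep := ae_all_iff.2 fun j => condCumulant_sub_le (P := P) (F.le j)
    (hf.measurable j).aestronglyMeasurable (ae_of_all _ (hf.abs_le j))
    (hg.measurable j).aestronglyMeasurable (ae_of_all _ (hg.abs_le j))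
    ((hint j).const_mul ((exp K - 1) / c)) (ae_of_all _ fun ω => by positivity)
    (ae_of_all _ fun ω => exp_truncQuad_add_le hρ hK hc y (Z j ω))
  have hpull := ae_all_iff.2 fun j =>
    condExp_smul (μ := P) ((exp K - 1) / c) (fun ω => |Z j ω| ^ (2 + ρ)) (F j)
  filter_upwards [hstep, hpull] with ω hω hsmul
  rw [compensator, mul_sum]
  refine sum_le_sum fun j _ => (hω j).trans_eq ?_
  rw [abs_zero, add_zero, add_zero, mul_assoc]
  exact congrArg _ (hsmul j)

end

variable {ι : Type*} {𝓁 : Filter ι} {Ω : ι → Type v} {mΩ : ∀ i, MeasurableSpace (Ω i)}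
  {P : ∀ i, Measure (Ω i)} [∀ i, IsProbabilityMeasure (P i)] {F : ∀ i, Filtration ℕ (mΩ i)}
  {N : ι → ℕ} {Z : ∀ i, ℕ → Ω i → ℝ} {ρ r : ℝ} {a : ι → ℝ}

lemma exists_abs_div_mul_sqrt_sub_lt (y : ℝ) (hr : 0 < r) :
    ∃ r' > 0, ∀ a p q : ℝ, 0 < a → |p - y * a ^ 2| < r' * a ^ 2 → |q - a ^ 2| < r' * a ^ 2 →
      |p / (a * √q) - y| < r := by
  have hcont : ContinuousAt (fun w : ℝ × ℝ => w.1 / √w.2) (y, 1) :=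
    ContinuousAt.div (by fun_prop) (by fun_prop) (by simp)
  obtain ⟨r', hr', hball⟩ := Metric.continuousAt_iff.1 hcont r hr
  refine ⟨r', hr', fun a p q ha hp hq => ?_⟩
  have hp' : |p / a ^ 2 - y| < r' := by
    rwa [div_sub' (by positivity), abs_div, abs_sq, div_lt_iff₀ (by positivity), mul_comm _ y]
  have hq' : |q / a ^ 2 - 1| < r' := by
    rwa [div_sub_one (by positivity), abs_div, abs_sq, div_lt_iff₀ (by positivity)]
  have hclose := hball (x := (p / a ^ 2, q / a ^ 2)) (max_lt hp' hq')
  have hscale : p / a ^ 2 / √(q / a ^ 2) = p / (a * √q) := by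
    rw [sqrt_div' _ (by positivity), sqrt_sq ha.le, div_div_div_eq, mul_comm, sq, mul_assoc,
      mul_div_mul_left _ _ ha.ne']
  simpa only [dist_eq, hscale, sqrt_one, div_one] using hclose

namespace IsNormalizedArray

lemma eventually_driftedLaw_jumpSq_le (h : IsNormalizedArray 𝓁 P F N Z ρ a) (hρ : 0 ≤ ρ)
    (ha : ∀ᶠ i in 𝓁, 0 < a i) (y : ℝ) (hr : 0 < r) {K : ℝ} (hK : 0 < K) :
    ∀ᶠ i in 𝓁, (driftedLaw (P i) (F i) (Z i) y (N i)).real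
      {ω | r * a i ^ 2 ≤ ∑ j ∈ range (N i), jumpSq (Z i j ω)} ≤ exp (1 - K) := by
  have hK' : 0 < exp K - 1 := sub_pos.2 (one_lt_exp_iff.2 hK)
  filter_upwards [ha, h.rpow_compensator (r / (exp |y| * (exp K - 1))) (by positivity)]
    with i hi hM
  have hc : 0 < r * a i ^ 2 := by positivity
  have := h.isProbabilityMeasure_driftedLaw y i
  refine (measureReal_mono fun ω hω => le_sum_cappedJump hK.le hc hω).trans ?_
  refine (h.isBoundedIncrement y 0 0 i).tiltedAlong_real_le_exp
    (isBoundedIncrement_cappedJump (h.stronglyMeasurable i) hK.le hc.le) ?_ K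
  filter_upwards [hM, sum_condCumulant_cappedJump_sub_le (h.stronglyMeasurable i) (h.integrable i)
    hρ hK.le hc y (N i)] with ω hMω hω
  calc _ ≤ _ := hω
    _ ≤ exp |y| * ((exp K - 1) / (r * a i ^ 2)) *
        (r / (exp |y| * (exp K - 1)) * a i ^ 2) := by gcongr
    _ = 1 := by field_simp

lemma tendsto_driftedLaw_jumpSq (h : IsNormalizedArray 𝓁 P F N Z ρ a) (hρ : 0 ≤ ρ)
    (ha : ∀ᶠ i in 𝓁, 0 < a i) (y : ℝ) (hr : 0 < r) :
    Tendsto (fun i => (driftedLaw (P i) (F i) (Z i) y (N i)).real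
      {ω | r * a i ^ 2 ≤ ∑ j ∈ range (N i), jumpSq (Z i j ω)}) 𝓁 (𝓝 0) := by
  refine tendsto_order.2 ⟨fun b hb => .of_forall fun i => hb.trans_le measureReal_nonneg,
    fun b hb => ?_⟩
  have hexp : Tendsto (fun K : ℝ => exp (1 - K)) atTop (𝓝 0) :=
    tendsto_exp_atBot.comp (tendsto_atBot_add_const_left _ 1 tendsto_neg_atTop_atBot)
  obtain ⟨K, hKb, hK⟩ := ((hexp.eventually (gt_mem_nhds hb)).and (eventually_gt_atTop 0)).exists
  filter_upwards [h.eventually_driftedLaw_jumpSq_le hρ ha y hr hK] with i hi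
  exact hi.trans_lt hKb

lemma tendsto_driftedLaw_truncQuad (h : IsNormalizedArray 𝓁 P F N Z ρ a) (hρ : 0 < ρ)
    (ha : Tendsto a 𝓁 atTop) (y l s : ℝ) (hr : 0 < r) :
    Tendsto (fun i => (driftedLaw (P i) (F i) (Z i) y (N i)).real
      {ω | (l * y + s + r) * a i ^ 2 ≤ ∑ j ∈ range (N i), truncQuad l s 0 (Z i j ω)})
      𝓁 (𝓝 0) := by
  set θ := r / (l ^ 2 + 1)
  have hθ : 0 < θ := by positivity
  have hθl : θ * (l ^ 2 + 1) = r := by simp only [θ]; field_simp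
  have hlim : Tendsto (fun i => exp (-(θ * r / 4 * a i ^ 2))) 𝓁 (𝓝 0) :=
    tendsto_exp_neg_atTop_nhds_zero.comp
      (((tendsto_pow_atTop two_ne_zero).comp ha).const_mul_atTop (by positivity))
  refine squeeze_zero' (.of_forall fun i => measureReal_nonneg) ?_ hlim
  filter_upwards [h.eventually_driftedLaw_le_exp hρ y l s 0 hθ.le
    (show 0 < θ * r / 4 by positivity)] with i hi
  refine (hi _).trans (exp_le_exp.2 ?_)
  have hquad : θ * (θ * l ^ 2) ≤ θ * r := by gcongr; linarith
  linear_combination a i ^ 2 / 2 * hquad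

lemma tendsto_driftedLaw_abs_truncQuad (h : IsNormalizedArray 𝓁 P F N Z ρ a) (hρ : 0 < ρ)
    (ha : Tendsto a 𝓁 atTop) (y l s : ℝ) (hr : 0 < r) :
    Tendsto (fun i => (driftedLaw (P i) (F i) (Z i) y (N i)).real {ω | r * a i ^ 2 ≤
      |∑ j ∈ range (N i), truncQuad l s 0 (Z i j ω) - (l * y + s) * a i ^ 2|}) 𝓁 (𝓝 0) := by
  have hsum := (h.tendsto_driftedLaw_truncQuad hρ ha y l s hr).add
    (h.tendsto_driftedLaw_truncQuad hρ ha y (-1 * l) (-1 * s) hr)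
  rw [add_zero] at hsum
  refine squeeze_zero (fun i => measureReal_nonneg) (fun i => ?_) hsum
  have := h.isProbabilityMeasure_driftedLaw y i
  refine le_trans (measureReal_mono ?_) (measureReal_union_le _ _)
  intro ω hω
  have hneg : ∑ j ∈ range (N i), truncQuad (-1 * l) (-1 * s) 0 (Z i j ω) =
      -1 * ∑ j ∈ range (N i), truncQuad l s 0 (Z i j ω) := by
    rw [← sum_truncQuad_mul, mul_zero]
  simp only [Set.mem_union, Set.mem_ofPred_eq, hneg] at hω ⊢
  exact (le_abs.1 hω).imp (fun hω => by linarith) (fun hω => by linarith)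

/-- The self-normalized sum stays close to `y` unless the truncated sum, the truncated quadratic
variation or the jumps deviate. -/
lemma tendsto_driftedLaw_selfNormalized (h : IsNormalizedArray 𝓁 P F N Z ρ a) (hρ : 0 < ρ)
    (ha : Tendsto a 𝓁 atTop) (y : ℝ) (hr : 0 < r) :
    Tendsto (fun i => (driftedLaw (P i) (F i) (Z i) y (N i)).real
      {ω | r ≤ |selfNormalized (Z i) (N i) (a i) ω - y|}) 𝓁 (𝓝 0) := by
  obtain ⟨r', hr', hclose⟩ := exists_abs_div_mul_sqrt_sub_lt y hr
  have hpos := ha.eventually_gt_atTop 0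
  have hsum := ((h.tendsto_driftedLaw_abs_truncQuad hρ ha y 1 0 (half_pos hr')).add
    (h.tendsto_driftedLaw_abs_truncQuad hρ ha y 0 1 (half_pos hr'))).add
    (h.tendsto_driftedLaw_jumpSq hρ.le hpos y (half_pos hr'))
  simp only [one_mul, zero_mul, zero_add, add_zero] at hsum
  refine squeeze_zero' (.of_forall fun i => measureReal_nonneg) ?_ hsum
  filter_upwards [hpos] with i hi
  have := h.isProbabilityMeasure_driftedLaw y i
  refine le_trans (measureReal_mono ?_) ((measureReal_union_le _ _).trans
    (add_le_add_left (measureReal_union_le _ _) _))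
  intro ω hω
  by_contra hcon
  simp only [Set.mem_union, Set.mem_ofPred_eq, not_or, not_le] at hcon
  obtain ⟨⟨hT, hQ⟩, hJ⟩ := hcon
  refine (hclose (a i) _ _ hi ?_ ?_).not_ge hω
  · have hST := abs_sum_sub_sum_truncQuad_le (range (N i)) (fun j => Z i j ω)
    linarith [abs_sub_le (∑ j ∈ range (N i), Z i j ω)
      (∑ j ∈ range (N i), truncQuad 1 0 0 (Z i j ω)) (y * a i ^ 2)]
  · have hsq : ∑ j ∈ range (N i), Z i j ω ^ 2 = ∑ j ∈ range (N i), truncQuad 0 1 0 (Z i j ω) +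
        ∑ j ∈ range (N i), jumpSq (Z i j ω) := by
      simp only [← truncQuad_add_jumpSq, sum_add_distrib]
    rw [hsq, add_sub_right_comm]
    refine (abs_add_le _ _).trans_lt ?_
    rw [abs_of_nonneg (sum_nonneg fun j _ => jumpSq_nonneg (Z i j ω))]
    linarith

end IsNormalizedArray

end LawOfLargeNumbers

section LowerBound

universe v

variable {ι : Type*} {𝓁 : Filter ι} {Ω : ι → Type v} {mΩ : ∀ i, MeasurableSpace (Ω i)}
  {P : ∀ i, Measure (Ω i)} [∀ i, IsProbabilityMeasure (P i)] {F : ∀ i, Filtration ℕ (mΩ i)}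
  {N : ι → ℕ} {Z : ∀ i, ℕ → Ω i → ℝ} {ρ r η : ℝ} {a : ι → ℝ}

lemma measurable_selfNormalized {Ω : Type*} [MeasurableSpace Ω] {Z : ℕ → Ω → ℝ}
    (hZ : ∀ j, Measurable (Z j)) (N : ℕ) (a : ℝ) : Measurable (selfNormalized Z N a) := by
  unfold selfNormalized
  fun_prop

namespace IsNormalizedArray

lemma eventually_half_le_driftedLaw (h : IsNormalizedArray 𝓁 P F N Z ρ a) (hρ : 0 < ρ)
    (ha : Tendsto a 𝓁 atTop) (y : ℝ) (hr : 0 < r) (hη : 0 < η) :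
    ∀ᶠ i in 𝓁, 1 / 2 ≤ (driftedLaw (P i) (F i) (Z i) y (N i)).real
      {ω | ∑ j ∈ range (N i), truncQuad y 0 0 (Z i j ω) < (y ^ 2 + η) * a i ^ 2 ∧
        |selfNormalized (Z i) (N i) (a i) ω - y| < r} := by
  have hsum := (h.tendsto_driftedLaw_truncQuad hρ ha y y 0 hη).add
    (h.tendsto_driftedLaw_selfNormalized hρ ha y hr)
  filter_upwards [hsum.eventually (gt_mem_nhds (show 0 + 0 < (1 / 2 : ℝ) by norm_num))] with i hi
  have := h.isProbabilityMeasure_driftedLaw y i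
  set L := driftedLaw (P i) (F i) (Z i) y (N i)
  set E := {ω | ∑ j ∈ range (N i), truncQuad y 0 0 (Z i j ω) < (y ^ 2 + η) * a i ^ 2 ∧
    |selfNormalized (Z i) (N i) (a i) ω - y| < r}
  have hcompl : Eᶜ =
      {ω | (y * y + 0 + η) * a i ^ 2 ≤ ∑ j ∈ range (N i), truncQuad y 0 0 (Z i j ω)} ∪
        {ω | r ≤ |selfNormalized (Z i) (N i) (a i) ω - y|} := by
    ext ω
    simp only [E, Set.mem_compl_iff, Set.mem_union, Set.mem_ofPred_eq, not_and_or, not_lt, sq,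
      add_zero]
  have htotal : 1 ≤ L.real E + L.real Eᶜ := by
    simpa only [Set.union_compl_self, probReal_univ] using measureReal_union_le (μ := L) E Eᶜ
  have hunion := measureReal_union_le (μ := L)
    {ω | (y * y + 0 + η) * a i ^ 2 ≤ ∑ j ∈ range (N i), truncQuad y 0 0 (Z i j ω)}
    {ω | r ≤ |selfNormalized (Z i) (N i) (a i) ω - y|}
  rw [← hcompl] at hunion
  linarith

lemma eventually_exp_le_real_abs_selfNormalized_sub_lt (h : IsNormalizedArray 𝓁 P F N Z ρ a)
    (hρ : 0 < ρ) (ha : Tendsto a 𝓁 atTop) (y : ℝ) (hr : 0 < r) (hη : 0 < η) :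
    ∀ᶠ i in 𝓁, exp (-(a i ^ 2 * (y ^ 2 / 2 + η))) ≤
      (P i).real {ω | |selfNormalized (Z i) (N i) (a i) ω - y| < r} := by
  have hη3 : 0 < η / 3 := by positivity
  have hlarge := (((tendsto_pow_atTop two_ne_zero).comp ha).const_mul_atTop hη3).eventually_ge_atTop
    (log 2)
  filter_upwards [hlarge, h.eventually_half_le_driftedLaw hρ ha y hr hη3,
    h.eventually_abs_sum_condCumulant_sub_le hρ y 0 0 hη3] with i hi hhalf hcumulant
  set E := {ω | ∑ j ∈ range (N i), truncQuad y 0 0 (Z i j ω) < (y ^ 2 + η / 3) * a i ^ 2 ∧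
    |selfNormalized (Z i) (N i) (a i) ω - y| < r}
  have hE : MeasurableSet E :=
    (measurableSet_lt (Finset.measurable_fun_sum _ fun j _ =>
      (measurable_truncQuad y 0 0).comp (h.measurable i j)) measurable_const).inter
    (measurableSet_lt ((measurable_selfNormalized (h.measurable i) _ _).sub_const y).norm
      measurable_const)
  have hdensity : ∀ᵐ ω ∂P i, ω ∈ E → compensatedSum (P i) (F i) (truncIncrement y 0 0 (Z i)) (N i) ω
      ≤ (y ^ 2 / 2 + 2 * (η / 3)) * a i ^ 2 := by
    filter_upwards [hcumulant] with ω hω hωE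
    rw [compensatedSum, sum_sub_distrib]
    simp only [truncIncrement] at hω ⊢
    linarith [(abs_le.1 hω).1, hωE.1]
  calc exp (-(a i ^ 2 * (y ^ 2 / 2 + η)))
    _ ≤ exp (-log 2 - (y ^ 2 / 2 + 2 * (η / 3)) * a i ^ 2) :=
        exp_le_exp.2 (by linarith [show log 2 ≤ η / 3 * a i ^ 2 from hi])
    _ = 1 / 2 / exp ((y ^ 2 / 2 + 2 * (η / 3)) * a i ^ 2) := by
        rw [exp_sub, exp_neg, exp_log two_pos, one_div]
    _ ≤ (P i).real E := by
        rw [div_le_iff₀' (exp_pos _)]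
        exact hhalf.trans ((h.isBoundedIncrement y 0 0 i).tiltedAlong_real_le_exp_mul hE hdensity)
    _ ≤ _ := measureReal_mono fun ω hω => hω.2

end IsNormalizedArray

end LowerBound

section LargeDeviation

section

variable {Ω : Type*} [MeasurableSpace Ω] {μ : Measure Ω} [IsFiniteMeasure μ] {s : Set Ω}
  {v t C : ℝ}

lemma neg_le_inv_mul_log_of_exp_le (hv : 0 < v) (h : exp (-(v * t)) ≤ μ.real s) :
    ((-t : ℝ) : EReal) ≤ ((v⁻¹ : ℝ) : EReal) * ENNReal.log (μ s) := by
  have hlog : ((-(v * t) : ℝ) : EReal) ≤ ENNReal.log (μ s) := by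
    have := ENNReal.log_le_log (ENNReal.ofReal_le_ofReal h)
    rwa [ENNReal.log_ofReal_of_pos (exp_pos _), log_exp, ofReal_measureReal] at this
  calc ((-t : ℝ) : EReal) = ((v⁻¹ : ℝ) : EReal) * ((-(v * t) : ℝ) : EReal) := by
        rw [← EReal.coe_mul, mul_neg, inv_mul_cancel_left₀ hv.ne']
    _ ≤ _ := mul_le_mul_of_nonneg_left hlog (EReal.coe_nonneg.2 (inv_nonneg.2 hv.le))

lemma inv_mul_log_le_of_le_exp (hv : 0 < v) (hC : 0 < C) (h : μ.real s ≤ C * exp (-(v * t))) :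
    ((v⁻¹ : ℝ) : EReal) * ENNReal.log (μ s) ≤ ((log C / v - t : ℝ) : EReal) := by
  have hlog : ENNReal.log (μ s) ≤ ((log C - v * t : ℝ) : EReal) := by
    have := ENNReal.log_le_log (ENNReal.ofReal_le_ofReal h)
    rwa [ofReal_measureReal, ENNReal.log_ofReal_of_pos (by positivity),
      log_mul hC.ne' (exp_pos _).ne', log_exp, ← sub_eq_add_neg] at this
  calc _ ≤ ((v⁻¹ : ℝ) : EReal) * ((log C - v * t : ℝ) : EReal) :=
        mul_le_mul_of_nonneg_left hlog (EReal.coe_nonneg.2 (inv_nonneg.2 hv.le))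
    _ = _ := by
        rw [← EReal.coe_mul, mul_sub, inv_mul_cancel_left₀ hv.ne', inv_mul_eq_div]

end

universe u

variable {ι : Type*} {𝓁 : Filter ι} {Ω : ι → Type u} {mΩ : ∀ i, MeasurableSpace (Ω i)}
  {P : ∀ i, Measure (Ω i)} [∀ i, IsProbabilityMeasure (P i)] {v : ι → ℝ}
  {E : Type*} [PseudoMetricSpace E] {Y : ∀ i, Ω i → E}

theorem neg_iInf_interior_le_liminf {I : E → ℝ} (hv : ∀ᶠ i in 𝓁, 0 < v i)
    (h : ∀ y, ∀ r > 0, ∀ η > 0, ∀ᶠ i in 𝓁,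
      exp (-(v i * (I y + η))) ≤ (P i).real {ω | dist (Y i ω) y < r}) (B : Set E) :
    -(⨅ y ∈ interior B, (I y : EReal)) ≤
      liminf (fun i => (((v i)⁻¹ : ℝ) : EReal) * ENNReal.log (P i {ω | Y i ω ∈ B})) 𝓁 := by
  rw [EReal.neg_le]
  refine le_iInf₂ fun y hy => ?_
  rw [EReal.neg_le]
  refine EReal.ge_of_forall_gt_iff_ge.1 fun w hw => ?_
  rw [← EReal.coe_neg, EReal.coe_lt_coe_iff] at hw
  obtain ⟨r, hr, hball⟩ := Metric.isOpen_iff.1 isOpen_interior y hy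
  refine le_liminf_of_le (h := ?_)
  filter_upwards [hv, h y r hr (-w - I y) (by linarith)] with i hi hexp
  rw [add_sub_cancel] at hexp
  rw [← neg_neg w]
  exact neg_le_inv_mul_log_of_exp_le hi
    (hexp.trans (measureReal_mono fun ω hω => interior_subset (s := B) (hball hω)))

variable {J : ℝ → ℝ} {z : E} {x C : ℝ}

lemma limsup_inv_mul_log_le_neg (hv : Tendsto v 𝓁 atTop) (hC : 0 < C)
    (h : ∀ η > 0, ∀ᶠ i in 𝓁,
      (P i).real {ω | x ≤ dist (Y i ω) z} ≤ C * exp (-(v i * (J x - η))))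
    {B : Set E} (hB : ∀ y ∈ B, x ≤ dist y z) :
    limsup (fun i => (((v i)⁻¹ : ℝ) : EReal) * ENNReal.log (P i {ω | Y i ω ∈ B})) 𝓁 ≤
      ((-J x : ℝ) : EReal) := by
  refine EReal.le_of_forall_lt_iff_le.1 fun w hw => ?_
  rw [EReal.coe_lt_coe_iff] at hw
  have hη : 0 < (w + J x) / 2 := by linarith
  have hlog : Tendsto (fun i => log C / v i) 𝓁 (𝓝 0) := hv.const_div_atTop _
  refine limsup_le_of_le (h := ?_)
  filter_upwards [hv.eventually_gt_atTop 0, hlog.eventually (ge_mem_nhds hη), h _ hη]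
    with i hi hlogi htail
  have hsub : (P i).real {ω | Y i ω ∈ B} ≤ (P i).real {ω | x ≤ dist (Y i ω) z} :=
    measureReal_mono fun ω hω => hB _ hω
  refine (inv_mul_log_le_of_le_exp hi hC (hsub.trans htail)).trans ?_
  exact EReal.coe_le_coe_iff.2 (by linarith)

theorem limsup_le_neg_iInf_closure [ProperSpace E] (hv : Tendsto v 𝓁 atTop) (hC : 0 < C)
    (hJ : J 0 = 0)
    (h : ∀ x > 0, ∀ η > 0, ∀ᶠ i in 𝓁,
      (P i).real {ω | x ≤ dist (Y i ω) z} ≤ C * exp (-(v i * (J x - η)))) (B : Set E) :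
    limsup (fun i => (((v i)⁻¹ : ℝ) : EReal) * ENNReal.log (P i {ω | Y i ω ∈ B})) 𝓁 ≤
      -(⨅ y ∈ closure B, (J (dist y z) : EReal)) := by
  rcases B.eq_empty_or_nonempty with rfl | hB
  · refine limsup_le_of_le (h := ?_)
    filter_upwards [hv.eventually_gt_atTop 0] with i hi
    simp [EReal.coe_mul_bot_of_pos (inv_pos.2 hi)]
  obtain ⟨y, hy, hdist⟩ := isClosed_closure.exists_infDist_eq_dist hB.closure z
  rw [Metric.infDist_closure, dist_comm] at hdist
  have hfar (y' : E) (hy' : y' ∈ B) : dist y z ≤ dist y' z := by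
    rw [← hdist, dist_comm]
    exact Metric.infDist_le_dist_of_mem hy'
  have hbound : limsup (fun i => (((v i)⁻¹ : ℝ) : EReal) * ENNReal.log (P i {ω | Y i ω ∈ B})) 𝓁 ≤
      ((-J (dist y z) : ℝ) : EReal) := by
    rcases (dist_nonneg : 0 ≤ dist y z).eq_or_lt with hzero | hpos
    · refine limsup_inv_mul_log_le_neg hv one_pos (fun η hη => ?_) hfar
      filter_upwards [hv.eventually_ge_atTop 0] with i hi
      rw [← hzero, hJ, zero_sub, mul_neg, neg_neg, one_mul]
      exact measureReal_le_one.trans (one_le_exp (mul_nonneg hi hη.le))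
    · exact limsup_inv_mul_log_le_neg hv hC (h _ hpos) hfar
  refine hbound.trans ?_
  rw [EReal.coe_neg, EReal.neg_le_neg_iff]
  exact iInf₂_le y hy

end LargeDeviation

section Reduction

namespace MDS

variable {Ω : Type} {mΩ : MeasurableSpace Ω} {P : Measure Ω}

/-- The filtration of a sequence of martingale differences, as a bundled object. -/
def filtration (A : MDS Ω P) : Filtration ℕ mΩ :=
  ⟨A.F, A.F_mono, A.F_le⟩

/-- The martingale differences `b X (j + 1)`, indexed from `0` and extended by `0` after time `n`,
where the structure says nothing about `X`. -/
noncomputable def scaled (A : MDS Ω P) (b : ℝ) : ℕ → Ω → ℝ :=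
  fun j ω => if j < A.n then b * A.X (j + 1) ω else 0

variable {A : MDS Ω P} {b ρ δ ε a : ℝ} {j : ℕ}

lemma scaled_of_lt (hj : j < A.n) : A.scaled b j = fun ω => b * A.X (j + 1) ω := by
  ext ω
  exact if_pos hj

lemma scaled_of_le (hj : A.n ≤ j) : A.scaled b j = 0 := by
  ext ω
  exact if_neg hj.not_gt

lemma sum_scaled (φ : ℝ → ℝ) (ω : Ω) :
    ∑ j ∈ range A.n, φ (A.scaled b j ω) = ∑ i ∈ Icc 1 A.n, φ (b * A.X i ω) := by
  rw [← Ico_add_one_right_eq_Icc, sum_Ico_eq_sum_range]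
  refine sum_congr rfl fun j hj => ?_
  rw [scaled_of_lt (mem_range.1 hj), add_comm]

lemma stronglyMeasurable_scaled (A : MDS Ω P) (b : ℝ) (j : ℕ) :
    StronglyMeasurable[A.filtration (j + 1)] (A.scaled b j) := by
  rcases lt_or_ge j A.n with hj | hj
  · rw [scaled_of_lt hj]
    exact (A.meas (j + 1) (by omega) hj).const_mul b
  · rw [scaled_of_le hj]
    exact stronglyMeasurable_zero

lemma condExp_scaled_eq_zero (A : MDS Ω P) (b : ℝ) (j : ℕ) :
    P[A.scaled b j | A.filtration j] =ᵐ[P] 0 := by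
  rcases lt_or_ge j A.n with hj | hj
  · rw [scaled_of_lt hj]
    filter_upwards [condExp_smul b (A.X (j + 1)) (A.F j), A.mean_zero (j + 1) (by omega) hj]
      with ω hsmul hzero
    rw [add_tsub_cancel_right] at hzero
    exact hsmul.trans (by rw [Pi.smul_apply, hzero, Pi.zero_apply, smul_zero])
  · rw [scaled_of_le hj, condExp_zero]

lemma CondA2.integrable_abs_scaled_rpow (h : A.CondA2 ρ ε) (hρ : 0 < ρ) (b : ℝ) (j : ℕ) :
    Integrable (fun ω => |A.scaled b j ω| ^ (2 + ρ)) P := by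
  rcases lt_or_ge j A.n with hj | hj
  · simp only [scaled_of_lt hj, abs_mul, mul_rpow (abs_nonneg _) (abs_nonneg _)]
    exact (h.2.2.1 (j + 1) (by omega) hj).const_mul _
  · simp [scaled_of_le hj, zero_rpow (by linarith : 2 + ρ ≠ 0)]

lemma compensator_scaled {φ : ℝ → ℝ} {c : ℝ} (hφ : ∀ x, φ (b * x) = c * φ x) :
    ∀ᵐ ω ∂P, compensator P A.filtration (fun j ω' => φ (A.scaled b j ω')) A.n ω =
      c * ∑ i ∈ Icc 1 A.n, (P[fun ω' => φ (A.X i ω') | A.F (i - 1)]) ω := by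
  have hpull := ae_all_iff.2 fun i =>
    condExp_smul (μ := P) c (fun ω => φ (A.X (i + 1) ω)) (A.F i)
  filter_upwards [hpull] with ω hω
  rw [compensator, ← Ico_add_one_right_eq_Icc, sum_Ico_eq_sum_range, mul_sum]
  refine sum_congr rfl fun j hj => ?_
  simp only [scaled_of_lt (mem_range.1 hj), hφ, add_comm 1, add_tsub_cancel_right]
  exact hω j

lemma Bsq_pos (A : MDS Ω P) : 0 < A.Bsq :=
  sum_pos (fun i hi => A.var_pos i (mem_Icc.1 hi).1 (mem_Icc.1 hi).2)
    ⟨1, mem_Icc.2 ⟨le_rfl, A.npos⟩⟩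

lemma CondA1.abs_compensator_sub_le (h : A.CondA1 δ) (a : ℝ) :
    ∀ᵐ ω ∂P, |compensator P A.filtration (fun j ω' => A.scaled (a / √A.Bsq) j ω' ^ 2) A.n ω - a ^ 2|
      ≤ δ ^ 2 * a ^ 2 := by
  have hB := A.Bsq_pos
  have hscale : (a / √A.Bsq) ^ 2 * A.Bsq = a ^ 2 := by
    rw [div_pow, sq_sqrt hB.le, div_mul_cancel₀ _ hB.ne']
  filter_upwards [h.2.2, compensator_scaled (A := A) (φ := (· ^ 2)) (mul_pow (a / √A.Bsq) · 2)]
    with ω hCV hcomp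
  calc |_ - a ^ 2| = (a / √A.Bsq) ^ 2 * |A.CV ω - A.Bsq| := by
        rw [hcomp, ← hscale, ← mul_sub, abs_mul, abs_sq, CV]
    _ ≤ (a / √A.Bsq) ^ 2 * (δ ^ 2 * A.Bsq) := by gcongr
    _ = δ ^ 2 * a ^ 2 := by rw [mul_left_comm, hscale]

lemma CondA2.compensator_le (h : A.CondA2 ρ ε) (ha : 0 < a) :
    ∀ᵐ ω ∂P, compensator P A.filtration (fun j ω' => |A.scaled (a / √A.Bsq) j ω'| ^ (2 + ρ)) A.n ω
      ≤ (a * ε) ^ ρ * a ^ 2 := by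
  have hB := A.Bsq_pos
  have hscale : (a / √A.Bsq) ^ (2 + ρ) * A.Bsq ^ ((2 + ρ) / 2) = a ^ 2 * a ^ ρ := by
    rw [rpow_div_two_eq_sqrt _ hB.le, div_rpow ha.le (sqrt_nonneg _),
      div_mul_cancel₀ _ (by positivity), rpow_add ha, rpow_two]
  have hhom (x : ℝ) : |a / √A.Bsq * x| ^ (2 + ρ) = (a / √A.Bsq) ^ (2 + ρ) * |x| ^ (2 + ρ) := by
    rw [abs_mul, abs_of_pos (by positivity), mul_rpow (by positivity) (abs_nonneg _)]
  filter_upwards [h.2.2.2, compensator_scaled (A := A) (φ := (|·| ^ (2 + ρ))) hhom]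
    with ω hmoment hcomp
  calc _ ≤ (a / √A.Bsq) ^ (2 + ρ) * (ε ^ ρ * A.Bsq ^ ((2 + ρ) / 2)) := by
        rw [hcomp]
        gcongr
    _ = (a * ε) ^ ρ * a ^ 2 := by
        rw [mul_left_comm, hscale, mul_rpow ha.le h.1.le]
        ring

lemma selfNormalized_scaled (A : MDS Ω P) (ha : 0 < a) (ω : Ω) :
    selfNormalized (A.scaled (a / √A.Bsq)) A.n a ω = A.W ω / a := by
  have hB := A.Bsq_pos
  have hb : 0 < a / √A.Bsq := by positivity
  have hS : ∑ j ∈ range A.n, A.scaled (a / √A.Bsq) j ω = a / √A.Bsq * A.S ω := by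
    rw [S, mul_sum]
    exact sum_scaled id ω
  have hQV : ∑ j ∈ range A.n, A.scaled (a / √A.Bsq) j ω ^ 2 = (a / √A.Bsq) ^ 2 * A.QV ω := by
    simp only [QV, mul_sum, ← mul_pow]
    exact sum_scaled (· ^ 2) ω
  rw [selfNormalized, hS, hQV, sqrt_mul (sq_nonneg _), sqrt_sq hb.le, mul_left_comm a,
    mul_div_mul_left _ _ hb.ne', mul_comm a, ← div_div, W]

end MDS

lemma isNormalizedArray_scaled {ι : Type*} {𝓁 : Filter ι} {Ω : ι → Type}
    {mΩ : ∀ i, MeasurableSpace (Ω i)} {P : ∀ i, Measure (Ω i)} {A : ∀ i, MDS (Ω i) (P i)}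
    {δ ε a : ι → ℝ} {ρ : ℝ} (hρ : 0 < ρ) (h₁ : ∀ i, (A i).CondA1 (δ i))
    (h₂ : ∀ i, (A i).CondA2 ρ (ε i)) (hδ : Tendsto δ 𝓁 (𝓝 0)) (ha : ∀ᶠ i in 𝓁, 0 < a i)
    (hε : Tendsto (fun i => a i * ε i) 𝓁 (𝓝 0)) :
    IsNormalizedArray 𝓁 P (fun i => (A i).filtration) (fun i => (A i).n)
      (fun i => (A i).scaled (a i / √(A i).Bsq)) ρ a where
  stronglyMeasurable i j := (A i).stronglyMeasurable_scaled _ j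
  integrable i j := (h₂ i).integrable_abs_scaled_rpow hρ _ j
  condExp_eq_zero i j := (A i).condExp_scaled_eq_zero _ j
  sq_compensator η hη := by
    have hδ2 : Tendsto (fun i => δ i ^ 2) 𝓁 (𝓝 0) := by simpa using hδ.pow 2
    filter_upwards [hδ2.eventually (ge_mem_nhds hη)] with i hi
    filter_upwards [(h₁ i).abs_compensator_sub_le (a i)] with ω hω
    exact hω.trans (by gcongr)
  rpow_compensator η hη := by
    have hερ : Tendsto (fun i => (a i * ε i) ^ ρ) 𝓁 (𝓝 0) := by
      simpa [zero_rpow hρ.ne'] using hε.rpow_const (Or.inr hρ.le)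
    filter_upwards [ha, hερ.eventually (ge_mem_nhds hη)] with i hai hi
    filter_upwards [(h₂ i).compensator_le hai] with ω hω
    exact hω.trans (by gcongr)

end Reduction

theorem self_normalized_MDP_general {ι : Type*} {𝓁 : Filter ι} {Ω : ι → Type}
    [∀ i, MeasurableSpace (Ω i)] {P : ∀ i, Measure (Ω i)} [∀ i, IsProbabilityMeasure (P i)]
    {A : ∀ i, MDS (Ω i) (P i)} {δ ε a : ι → ℝ} {ρ : ℝ} (hρ : 0 < ρ)
    (h₁ : ∀ i, (A i).CondA1 (δ i)) (h₂ : ∀ i, (A i).CondA2 ρ (ε i)) (hδ : Tendsto δ 𝓁 (𝓝 0))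
    (ha : Tendsto a 𝓁 atTop) (hε : Tendsto (fun i => a i * ε i) 𝓁 (𝓝 0)) (B : Set ℝ) :
    -(⨅ y ∈ interior B, ((y ^ 2 / 2 : ℝ) : EReal)) ≤
        liminf (fun i => (((a i ^ 2)⁻¹ : ℝ) : EReal) *
          ENNReal.log (P i {ω | (A i).W ω / a i ∈ B})) 𝓁 ∧
      limsup (fun i => (((a i ^ 2)⁻¹ : ℝ) : EReal) *
          ENNReal.log (P i {ω | (A i).W ω / a i ∈ B})) 𝓁 ≤
        -(⨅ y ∈ closure B, ((y ^ 2 / 2 : ℝ) : EReal)) := by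
  have hpos := ha.eventually_gt_atTop 0
  have hspeed : Tendsto (fun i => a i ^ 2) 𝓁 atTop := (tendsto_pow_atTop two_ne_zero).comp ha
  have harray := isNormalizedArray_scaled hρ h₁ h₂ hδ hpos hε
  refine ⟨neg_iInf_interior_le_liminf (hspeed.eventually_gt_atTop 0) (fun y r hr η hη => ?_) B, ?_⟩
  · filter_upwards [hpos, harray.eventually_exp_le_real_abs_selfNormalized_sub_lt hρ ha y hr hη]
      with i hi hball
    simpa only [dist_eq, (A i).selfNormalized_scaled hi] using hball
  · have htail (x : ℝ) (hx : x > 0) (η : ℝ) (hη : η > 0) : ∀ᶠ i in 𝓁,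
        (P i).real {ω | x ≤ dist ((A i).W ω / a i) 0} ≤
          6 * exp (-(a i ^ 2 * (x ^ 2 / 2 - η))) := by
      filter_upwards [hpos, harray.eventually_real_le_abs_selfNormalized_le hρ hpos hx hη]
        with i hi htail
      simpa only [dist_zero_right, norm_eq_abs, (A i).selfNormalized_scaled hi] using htail
    simpa only [dist_zero_right, norm_eq_abs, sq_abs] using
      limsup_le_neg_iInf_closure (J := fun x => x ^ 2 / 2) hspeed (show (0 : ℝ) < 6 by norm_num)
        (by norm_num) htail B

/-- Corollary 2.2: moderate deviation principle for self-normalized martingales. -/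
theorem self_normalized_MDP :
    ∀ (Ω : Type) [MeasurableSpace Ω] (P : Measure Ω), IsProbabilityMeasure P →
      ∀ (A : ℕ → MDS Ω P) (δ ε κ : ℕ → ℝ) (ρ : ℝ), 0 < ρ →
        (∀ n, (A n).CondA1 (δ n)) →
        (∀ n, (A n).CondA2 ρ (ε n)) →
        (∀ n, (A n).CondA3 (κ n)) →
        Tendsto (fun n => max (δ n) (max (ε n) (κ n))) atTop (nhds 0) →
        ∀ a : ℕ → ℝ, Tendsto a atTop atTop →
          Tendsto (fun n => a n * ε n) atTop (nhds 0) →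
          ∀ B : Set ℝ, MeasurableSet B →
            -(⨅ y ∈ interior B, ((y ^ 2 / 2 : ℝ) : EReal)) ≤
                Filter.liminf (fun n => (((a n ^ 2)⁻¹ : ℝ) : EReal) *
                  ENNReal.log (P {ω | (A n).W ω / a n ∈ B})) atTop ∧
              Filter.limsup (fun n => (((a n ^ 2)⁻¹ : ℝ) : EReal) *
                  ENNReal.log (P {ω | (A n).W ω / a n ∈ B})) atTop ≤
                -(⨅ y ∈ closure B, ((y ^ 2 / 2 : ℝ) : EReal)) :=
  fun _ _ _ _ _ _ _ _ _ hρ h₁ h₂ _ hmax _ ha hε B _ =>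
    self_normalized_MDP_general hρ h₁ h₂
      (squeeze_zero (fun n => (h₁ n).1) (fun _ => le_max_left _ _) hmax) ha hε B
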